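/- (Knutson–Tao saturation theorem, invariant form) Let λ_1, …, λ_s be dominant weights of SL(n) whose sum lies in the root lattice. If for some positive integer m the space of SL(n)-invariants in V(mλ_1) ⊗ ⋯ ⊗ V(mλ_s) is nonzero, then the space of SL(n)-invariants in V(λ_1) ⊗ ⋯ ⊗ V(λ_s) is nonzero. -/

import Mathlib

/-!
(Knutson–Tao saturation theorem, invariant form.)  Let `λ₁, …, λ_s` be dominant weights of
`SL(n)` whose sum lies in the root lattice.  If for some positive integer `m` the space of
`SL(n)`-invariants in `V(mλ₁) ⊗ ⋯ ⊗ V(mλ_s)` is nonzero, then the space of `SL(n)`-invariants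
in `V(λ₁) ⊗ ⋯ ⊗ V(λ_s)` is nonzero.

Weights of `SL(n)` are characters of the diagonal maximal torus, `diag d ↦ ∏ dᵢ^{aᵢ}`; they are
parametrised by `a ∈ ℤⁿ` modulo `ℤ·(1,…,1)` (since `det = 1`).  Such a character class lies in the
root lattice (= sum-zero vectors mod `(1,…,1)`) iff `n` divides the sum of the coordinates.
The irreducible representation `V(a)` is encoded by: an irreducible representation possessing a
highest weight vector of weight `a`; `HasInvariant` says the space of invariants is nonzero.
-/

open scoped TensorProduct
abbrev SL (n : ℕ) := Matrix.SpecialLinearGroup (Fin n) ℂ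

section Defs

variable {n : ℕ} {V W : Type*} [AddCommGroup V] [Module ℂ V] [AddCommGroup W] [Module ℂ W]

/-- A matrix in `SL(n)` lying in the standard maximal torus (diagonal matrices). -/
def SLIsDiag (g : SL n) : Prop := ∀ i j, i ≠ j → g.val i j = 0

/-- A matrix in `SL(n)` lying in the unipotent radical of the standard Borel
(upper triangular, 1's on the diagonal). -/
def SLIsUniUpper (g : SL n) : Prop :=
  (∀ i, g.val i i = 1) ∧ ∀ i j : Fin n, j < i → g.val i j = 0

/-- `v` is a highest weight vector of weight `a` (a character of the diagonal torus,
`diag d ↦ ∏ dᵢ^{aᵢ}`): it is nonzero, fixed by the unipotent radical of the Borel, and the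
torus acts on it through the character `a`. -/
def IsHWVector (ρ : Representation ℂ (SL n) V) (a : Fin n → ℤ) (v : V) : Prop :=
  v ≠ 0 ∧ (∀ g, SLIsUniUpper g → ρ g v = v) ∧
    ∀ g, SLIsDiag g → ρ g v = (∏ i, g.val i i ^ a i) • v

/-- The irreducible representation `V(a)` of highest weight `a` occurs in `ρ`:
equivalently (for completely reducible `ρ`), `ρ` has a highest weight vector of weight `a`. -/
def Occurs (ρ : Representation ℂ (SL n) V) (a : Fin n → ℤ) : Prop := ∃ v, IsHWVector ρ a v

/-- `ρ` is irreducible: `V ≠ 0` and the only invariant subspaces are `⊥` and `⊤`. -/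
def RepIsIrreducible (ρ : Representation ℂ (SL n) V) : Prop :=
  (∃ v : V, v ≠ 0) ∧ ∀ p : Submodule ℂ V, (∀ g, ∀ x ∈ p, ρ g x ∈ p) → p = ⊥ ∨ p = ⊤

/-- The space of invariants `V^G` is nonzero. -/
def HasInvariant (ρ : Representation ℂ (SL n) V) : Prop := ∃ v : V, v ≠ 0 ∧ ∀ g, ρ g v = v

/-- Dominance of the weight `a` (for the standard choice of positive roots). -/
def SLDominant (a : Fin n → ℤ) : Prop := ∀ i j : Fin n, i ≤ j → a j ≤ a i

/-- The tensor product of a finite family of representations of `SL(n)`,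
with the diagonal action. -/
noncomputable def piTensorRep {r : ℕ} {V : Fin r → Type*} [∀ i, AddCommGroup (V i)]
    [∀ i, Module ℂ (V i)] (ρ : ∀ i, Representation ℂ (SL n) (V i)) :
    Representation ℂ (SL n) (⨂[ℂ] i, V i) where
  toFun g := PiTensorProduct.map fun i => ρ i g
  map_one' := by simp
  map_mul' g h := by
    simpa using PiTensorProduct.map_mul (fun i => ρ i g) (fun i => ρ i h)

/-- The tensor product of two representations of `SL(n)` with the diagonal action. -/
noncomputable def tensorRep2 (ρ : Representation ℂ (SL n) V) (σ : Representation ℂ (SL n) W) :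
    Representation ℂ (SL n) (V ⊗[ℂ] W) := ρ.tprod σ

end Defs

/-!
An invariant of `V(mλ₁) ⊗ ⋯ ⊗ V(mλ_s)` is the same as a function on `SL(n)ˢ` that is a combination
of products of `m`-th powers of leading minors of translates of the `g_i`, one minor of size `d_j`
for each fundamental weight `ϖ_{d_j}` occurring in `λ_{i(j)}`, and that is invariant under diagonal
right translation. If such a function is nonzero, then evaluating it on one-parameter subgroups
bounds the position of a generic family of flags relative to any subspace: this is the
semistability inequality, in which `m` cancels. By induction on the dimension, the inequality
implies that for generic `g_i` and generic vectors `v_j ∈ ℂᴺ`, where `nN = ∑ d_j`, the tensors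
`g_{i(j)}(r) ⊗ v_j`, `r < d_j`, are linearly independent. The determinant formed by these `nN`
vectors is then nonzero, invariant under right translation and, by Laplace expansion, a function of
the above kind with `m = 1`, that is, an invariant of `V(λ₁) ⊗ ⋯ ⊗ V(λ_s)`.
-/

namespace Saturation

open Matrix

section Derivation

open MvPolynomial

open scoped TensorProduct in
theorem exists_derivation_algebraMap_X {k σ K : Type*} [CommRing k] [CommRing K]
    [Algebra k K] [Algebra (MvPolynomial σ k) K] [IsScalarTower k (MvPolynomial σ k) K]
    [Algebra.FormallyEtale (MvPolynomial σ k) K] (f : σ → K) :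
    ∃ D : Derivation k K K, ∀ s, D (algebraMap (MvPolynomial σ k) K (X s)) = f s := by
  let L : Ω[MvPolynomial σ k⁄k] →ₗ[MvPolynomial σ k] K :=
    (mkDerivation k f).liftKaehlerDifferential
  let e := KaehlerDifferential.tensorKaehlerEquivOfFormallyEtale k (MvPolynomial σ k) K
  refine ⟨(L.liftBaseChange K ∘ₗ e.symm.toLinearMap).compDer (KaehlerDifferential.D k K),
    fun s => ?_⟩
  simp [e, L, KaehlerDifferential.tensorKaehlerEquivOfFormallyEtale_symm_D_algebraMap]

theorem derivation_dotProduct_mulVec {k K β ν : Type*} [CommRing k] [CommRing K] [Algebra k K]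
    [Fintype β] [Fintype ν] (D : Derivation k K K) (y : β → K) (φ : Matrix β ν K) (v : ν → K) :
    D (y ⬝ᵥ φ *ᵥ v) = (D ∘ y) ⬝ᵥ φ *ᵥ v + y ⬝ᵥ φ.map D *ᵥ v + y ⬝ᵥ φ *ᵥ (D ∘ v) := by
  simp only [dotProduct, mulVec, map_sum, Derivation.leibniz, smul_eq_mul, Finset.mul_sum,
    Matrix.map_apply, Function.comp_apply, ← Finset.sum_add_distrib]
  refine Finset.sum_congr rfl fun q _ => Finset.sum_congr rfl fun p _ => ?_
  ring

end Derivation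

section GenericRank

variable {K E F : Type*} [Field K] [Infinite K] [AddCommGroup E] [Module K E] [AddCommGroup F]
  [Module K F]

theorem exists_linearIndependent_smul_sub {κ : Type*} [Finite κ] {b : κ → E}
    (hb : LinearIndependent K b) (c : κ → E) :
    ∃ t : K, LinearIndependent K (t • b - c) := by
  have := Fintype.ofFinite κ
  obtain ⟨G, hG⟩ := LinearMap.exists_leftInverse_of_injective (Fintype.linearCombination K b)
    (LinearMap.ker_eq_bot.2 (linearIndependent_iff_injective_fintypeLinearCombination.1 hb))
  let M : Module.End K (κ → K) := G ∘ₗ Fintype.linearCombination K c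
  obtain ⟨t, ht⟩ := (Module.End.finite_hasEigenvalue M).exists_notMem
  refine ⟨t, linearIndependent_iff_injective_fintypeLinearCombination.2 ?_⟩
  have hcomp : G ∘ₗ Fintype.linearCombination K (t • b - c) = t • LinearMap.id - M := by
    rw [← hG, ← LinearMap.comp_smul, ← LinearMap.comp_sub]
    congr 1
    refine LinearMap.ext fun a => ?_
    simp [Fintype.linearCombination_apply, smul_sub, Finset.smul_sum, smul_comm t]
  refine .of_comp (f := G) ?_
  rw [← LinearMap.coe_comp, hcomp, ← LinearMap.ker_eq_bot, LinearMap.ker_eq_bot']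
  intro a ha
  by_contra hne
  refine ht (Module.End.hasEigenvalue_of_hasEigenvector (x := a)
    ⟨Module.End.mem_eigenspace_iff.2 ?_, hne⟩)
  exact (sub_eq_zero.1 ha).symm

theorem apply_mem_range_of_finrank_range_le [FiniteDimensional K F] {φ ψ : E →ₗ[K] F}
    (h : ∀ t : K, Module.finrank K (LinearMap.range (t • φ - ψ)) ≤
      Module.finrank K (LinearMap.range φ)) {v : E} (hv : φ v = 0) :
    ψ v ∈ LinearMap.range φ := by
  by_contra hnot
  let B := Module.finBasis K (LinearMap.range φ)
  choose u hu using fun k => (B k).2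
  have hB : LinearIndependent K fun k => φ (u k) := by
    simpa only [hu, Function.comp_def, Submodule.subtype_apply] using
      B.linearIndependent.map' _ (Submodule.ker_subtype _)
  have hcons : LinearIndependent K (Fin.cons (ψ v) fun k => φ (u k) : Fin _ → F) :=
    linearIndependent_finCons.2 ⟨hB, fun hmem => hnot
      (Submodule.span_le.2 (Set.range_subset_iff.2 fun k => LinearMap.mem_range_self φ (u k)) hmem)⟩
  obtain ⟨t, ht⟩ := exists_linearIndependent_smul_sub hcons
    (Fin.cons 0 fun k => ψ (u k) : Fin _ → F)
  have hmem : ∀ k, (t • (Fin.cons (ψ v) fun k => φ (u k) : Fin _ → F) -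
      (Fin.cons 0 fun k => ψ (u k) : Fin _ → F)) k ∈ LinearMap.range (t • φ - ψ) :=
    Fin.cases ⟨-(t • v), by simp [hv]⟩ fun k => ⟨u k, by simp⟩
  have hle := Submodule.finrank_mono (Submodule.span_le.2 (Set.range_subset_iff.2 hmem))
  rw [finrank_span_eq_card ht, Fintype.card_fin] at hle
  exact absurd (hle.trans (h t)) (by omega)

theorem exists_mem_forall_apply_mem_range [FiniteDimensional K F] (H : Submodule K (E →ₗ[K] F)) :
    ∃ φ ∈ H, ∀ ψ ∈ H, ∀ v, φ v = 0 → ψ v ∈ LinearMap.range φ := by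
  have hbdd : (Set.range fun φ : H => Module.finrank K (LinearMap.range φ.1)).Finite :=
    (Set.finite_Iic (Module.finrank K F)).subset
      (Set.range_subset_iff.2 fun φ => Submodule.finrank_le _)
  obtain ⟨_, ⟨φ, rfl⟩, hmax⟩ := Set.exists_max_image _ id hbdd (Set.range_nonempty _)
  exact ⟨φ, φ.2, fun ψ hψ v => apply_mem_range_of_finrank_range_le fun t =>
    hmax _ ⟨⟨t • φ - ψ, H.sub_mem (H.smul_mem t φ.2) hψ⟩, rfl⟩⟩

theorem exists_mem_forall_dotProduct_mulVec_eq_zero {β ν : Type*} [Fintype β] [Fintype ν]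
    (H : Submodule K (Matrix β ν K)) :
    ∃ φ ∈ H, ∀ ψ ∈ H, ∀ (y : β → K) (v : ν → K), y ᵥ* φ = 0 → φ *ᵥ v = 0 →
      y ⬝ᵥ ψ *ᵥ v = 0 := by
  classical
  obtain ⟨_, ⟨φ, hφ, rfl⟩, hgen⟩ :=
    exists_mem_forall_apply_mem_range (H.map (Matrix.toLin' (R := K)).toLinearMap)
  refine ⟨φ, hφ, fun ψ hψ y v hy hv => ?_⟩
  obtain ⟨u, hu⟩ := hgen _ ⟨ψ, hψ, rfl⟩ v hv
  rw [← show φ *ᵥ u = ψ *ᵥ v from hu, dotProduct_mulVec, hy, zero_dotProduct]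

end GenericRank

section Adapted

variable {K E : Type*} [Field K] [AddCommGroup E] [Module K E] {n : ℕ}

theorem insert_setOf_lt {S : Set (Fin n)} {r : Fin n} (hr : r ∈ S) :
    insert r {r' ∈ S | r' < r} = {r' ∈ S | (r' : ℕ) < r + 1} := by
  ext r'
  simp only [Set.mem_insert_iff, Set.mem_ofPred_eq, Fin.lt_def, Nat.lt_succ_iff_lt_or_eq,
    ← Fin.ext_iff]
  constructor
  · rintro (rfl | ⟨h, h'⟩)
    exacts [⟨hr, .inr rfl⟩, ⟨h, .inl h'⟩]
  · rintro ⟨h, h' | h'⟩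
    exacts [.inr ⟨h, h'⟩, .inl h']

theorem initialSegment_induction {S : Set (Fin n)} {P : Set (Fin n) → Prop} (empty : P ∅)
    (insert : ∀ r ∈ S, P {r' ∈ S | r' < r} → P (insert r {r' ∈ S | r' < r})) (d : ℕ) :
    P {r ∈ S | (r : ℕ) < d} := by
  induction d with
  | zero => simpa using empty
  | succ d ih =>
    by_cases h : ∃ r ∈ S, (r : ℕ) = d
    · obtain ⟨r, hr, rfl⟩ := h
      exact insert_setOf_lt hr ▸ insert r hr ih
    · convert ih using 1
      ext r
      push Not at h
      exact and_congr_right fun hr => by have := h r hr; omega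

/-- The indices `r ∈ S` at which Gaussian elimination of the family `x` against the subspace `T`
produces an element of `T` with leading term `x r`. -/
def pivots (x : Fin n → E) (S : Set (Fin n)) (T : Submodule K E) : Set (Fin n) :=
  {r ∈ S | ∃ u ∈ Submodule.span K (x '' {r' ∈ S | r' < r}), x r + u ∈ T}

variable {x y : Fin n → E} {S P : Set (Fin n)} {T : Submodule K E}

theorem span_image_inf_le_span_pivots
    (hxy : ∀ r ∈ pivots x S T, y r - x r ∈ Submodule.span K (x '' {r' ∈ S | r' < r}))
    (hy : ∀ r ∈ pivots x S T, y r ∈ T) (d : ℕ) :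
    Submodule.span K (x '' {r ∈ S | (r : ℕ) < d}) ⊓ T ≤
      Submodule.span K (y '' {r ∈ pivots x S T | (r : ℕ) < d}) := by
  suffices Submodule.span K (x '' {r ∈ S | (r : ℕ) < d}) ⊓ T ≤
      Submodule.span K (y '' (pivots x S T ∩ {r ∈ S | (r : ℕ) < d})) from
    this.trans (Submodule.span_mono (Set.image_mono fun r hr => ⟨hr.1, hr.2.2⟩))
  refine initialSegment_induction
    (P := fun U => Submodule.span K (x '' U) ⊓ T ≤ Submodule.span K (y '' (pivots x S T ∩ U)))
    (by simp) (fun r hr ih => ?_) d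
  rintro w ⟨hw, hwT⟩
  have hmono : Submodule.span K (y '' (pivots x S T ∩ {r' ∈ S | r' < r})) ≤
      Submodule.span K (y '' (pivots x S T ∩ insert r {r' ∈ S | r' < r})) :=
    Submodule.span_mono (Set.image_mono (Set.inter_subset_inter_right _ (Set.subset_insert _ _)))
  rw [SetLike.mem_coe, Set.image_insert_eq] at hw
  obtain ⟨a, u, hu, rfl⟩ := Submodule.mem_span_insert.1 hw
  by_cases ha : a = 0
  · rw [ha, zero_smul, zero_add] at hwT ⊢
    exact hmono (ih ⟨hu, hwT⟩)
  have hr' : r ∈ pivots x S T :=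
    ⟨hr, a⁻¹ • u, Submodule.smul_mem _ _ hu, by simpa [smul_smul, ha] using T.smul_mem a⁻¹ hwT⟩
  have hsub : a • x r + u - a • y r = u - a • (y r - x r) := by module
  have hmem := ih ⟨hsub ▸ Submodule.sub_mem _ hu (Submodule.smul_mem _ a (hxy r hr')),
    T.sub_mem hwT (T.smul_mem a (hy r hr'))⟩
  rw [← sub_add_cancel (a • x r + u) (a • y r)]
  exact Submodule.add_mem _ (hmono hmem)
    (Submodule.smul_mem _ _ (Submodule.subset_span ⟨r, ⟨hr', Set.mem_insert _ _⟩, rfl⟩))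

theorem linearIndepOn_of_sub_mem_span (hx : LinearIndepOn K x S) (hPS : P ⊆ S)
    (hxy : ∀ r ∈ P, y r - x r ∈ Submodule.span K (x '' {r' ∈ S | r' < r})) :
    LinearIndepOn K y P := by
  have key : LinearIndepOn K y {r ∈ P | (r : ℕ) < n} := by
    refine initialSegment_induction (linearIndepOn_empty K y) (fun r hr ih => ?_) n
    refine ih.insert fun hmem => ?_
    have hle : Submodule.span K (y '' {r' ∈ P | r' < r}) ≤
        Submodule.span K (x '' {r' ∈ S | r' < r}) := by
      rw [Submodule.span_le]
      rintro _ ⟨r', hr', rfl⟩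
      rw [← sub_add_cancel (y r') (x r')]
      have hmono : {r'' ∈ S | r'' < r'} ⊆ {r'' ∈ S | r'' < r} :=
        fun r'' h => ⟨h.1, h.2.trans hr'.2⟩
      exact Submodule.add_mem _ (Submodule.span_mono (Set.image_mono hmono) (hxy r' hr'.1))
        (Submodule.subset_span (Set.mem_image_of_mem x ⟨hPS hr'.1, hr'.2⟩))
    have hxr : x r ∈ Submodule.span K (x '' {r' ∈ S | r' < r}) := by
      simpa using Submodule.sub_mem _ (hle hmem) (hxy r hr)
    have hins : LinearIndepOn K x (insert r {r' ∈ S | r' < r}) :=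
      hx.mono (Set.insert_subset (hPS hr) (Set.sep_subset _ _))
    exact hins.notMem_span_of_insert (fun h => lt_irrefl r h.2) hxr
  exact key.mono fun r hr => ⟨hr, r.2⟩

theorem exists_sum_smul_eq_of_mem_span_image {κ : Type*} [Fintype κ] {z : κ → E} {U : Set κ}
    {u : E} (hu : u ∈ Submodule.span K (z '' U)) :
    ∃ a : κ → K, (∀ r ∉ U, a r = 0) ∧ ∑ r, a r • z r = u := by
  obtain ⟨a, ha, rfl⟩ := Finsupp.mem_span_image_iff_linearCombination K |>.1 hu
  exact ⟨a, fun r hr => Finsupp.notMem_support_iff.1 fun h => hr (ha h),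
    (Finsupp.sum_fintype a (fun r s => s • z r) fun r => zero_smul K (z r)).symm⟩

/-- A lower triangular matrix with unit diagonal. -/
def IsLowerUnitriangular {A : Type*} [Zero A] [One A] (c : Matrix (Fin n) (Fin n) A) : Prop :=
  (∀ r, c r r = 1) ∧ ∀ r r', r < r' → c r r' = 0

/-- The rows of the product of the matrix `c` and the column of vectors `x`. -/
def rowTransform (c : Matrix (Fin n) (Fin n) K) (x : Fin n → E) (r : Fin n) : E :=
  ∑ r', c r r' • x r'

theorem exists_isLowerUnitriangular_of_pivots (x : Fin n → E) (S : Set (Fin n))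
    (T : Submodule K E) :
    ∃ c : Matrix (Fin n) (Fin n) K, IsLowerUnitriangular c ∧
      (∀ r ∈ S, ∀ r' ∉ S, c r r' = 0) ∧
      (∀ r ∈ pivots x S T,
        rowTransform c x r - x r ∈ Submodule.span K (x '' {r' ∈ S | r' < r})) ∧
      ∀ r ∈ pivots x S T, rowTransform c x r ∈ T := by
  classical
  have hrow : ∀ r, ∃ a : Fin n → K, (∀ r', r ≤ r' → a r' = 0) ∧ (∀ r' ∉ S, a r' = 0) ∧
      (r ∈ pivots x S T → ∑ r', a r' • x r' ∈ Submodule.span K (x '' {r' ∈ S | r' < r}) ∧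
        x r + ∑ r', a r' • x r' ∈ T) := by
    intro r
    by_cases hr : r ∈ pivots x S T
    · obtain ⟨-, u, hu, huT⟩ := hr
      obtain ⟨a, ha, rfl⟩ := exists_sum_smul_eq_of_mem_span_image hu
      exact ⟨a, fun r' h => ha r' fun h' => h.not_gt h'.2, fun r' h => ha r' fun h' => h h'.1,
        fun _ => ⟨hu, huT⟩⟩
    · exact ⟨0, fun _ _ => rfl, fun _ _ => rfl, fun h => absurd h hr⟩
  choose a ha haS haT using hrow
  have hsum : ∀ r, rowTransform (1 + Matrix.of a) x r = x r + ∑ r', a r r' • x r' := by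
    intro r
    simp [rowTransform, add_smul, Finset.sum_add_distrib, Matrix.one_apply]
  refine ⟨1 + Matrix.of a, ⟨fun r => ?_, fun r r' h => ?_⟩, fun r hr r' hr' => ?_, fun r hr => ?_,
    fun r hr => ?_⟩
  · simp [ha r r le_rfl]
  · simp [ha r r' h.le, h.ne]
  · simp [haS r r' hr', ne_of_mem_of_not_mem hr hr']
  · rw [hsum, add_sub_cancel_left]
    exact (haT r hr).1
  · rw [hsum]
    exact (haT r hr).2

/-- The row operations `c` bring the part of the family `x` indexed by `S` into echelon form with
respect to the subspace `T`: the new vectors at the indices in `P` form a basis of `T` compatible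
with the flags spanned by the initial segments. -/
structure IsAdapted (x : Fin n → E) (S : Set (Fin n)) (T : Submodule K E)
    (c : Matrix (Fin n) (Fin n) K) (P : Finset (Fin n)) : Prop where
  isLowerUnitriangular : IsLowerUnitriangular c
  subset : ↑P ⊆ S
  apply_eq_zero : ∀ r ∈ P, ∀ r' ∉ S, c r r' = 0
  mem : ∀ r ∈ P, rowTransform c x r ∈ T
  linearIndepOn : LinearIndepOn K (rowTransform c x) P
  card_eq : P.card = Module.finrank K T
  span_image_inf_le : ∀ d : ℕ, Submodule.span K (x '' {r ∈ S | (r : ℕ) < d}) ⊓ T ≤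
    Submodule.span K (rowTransform c x '' {r ∈ (P : Set (Fin n)) | (r : ℕ) < d})

theorem exists_isAdapted (hx : LinearIndepOn K x S) (hspan : Submodule.span K (x '' S) = ⊤)
    (T : Submodule K E) : ∃ c P, IsAdapted x S T c P := by
  obtain ⟨c, hc, hcS, hcx, hcT⟩ := exists_isLowerUnitriangular_of_pivots x S T
  have hli := linearIndepOn_of_sub_mem_span hx (fun r hr => hr.1) hcx
  have hle := span_image_inf_le_span_pivots hcx hcT
  have hPS : pivots x S T ⊆ S := fun r hr => hr.1
  obtain ⟨P, hP⟩ := (pivots x S T).toFinite.exists_finset_coe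
  rw [← hP] at hcT hli hle hPS
  have hT : Submodule.span K (rowTransform c x '' P) = T := by
    refine le_antisymm (Submodule.span_le.2 (Set.image_subset_iff.2 hcT)) ?_
    simpa [hspan] using hle n
  have hcard := finrank_span_eq_card hli
  rw [← Set.image_eq_range (rowTransform c x) (P : Set (Fin n)), hT] at hcard
  exact ⟨c, P, hc, hPS, fun r hr => hcS r (hPS hr), hcT, hli, by simpa using hcard.symm, hle⟩

theorem exists_linearMap_of_linearIndepOn {κ V W : Type*} [AddCommGroup V] [Module K V]
    [AddCommGroup W] [Module K W] {y : κ → V} {w : κ → W} {P : Set κ} (hy : LinearIndepOn K y P)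
    (hw : LinearIndepOn K w P) :
    ∃ A : V →ₗ[K] W, (∀ r ∈ P, A (y r) = w r) ∧
      ∀ u ∈ Submodule.span K (y '' P), A u = 0 → u = 0 := by
  let B : Submodule.span K (Set.range fun r : P => y r) →ₗ[K] W :=
    Finsupp.linearCombination K (fun r : P => w r) ∘ₗ hy.repr
  have hinj : Function.Injective (Finsupp.linearCombination K fun r : P => w r) := hw
  have hB : Function.Injective B := hinj.comp (LinearMap.ker_eq_bot.1 hy.repr_ker)
  obtain ⟨A, hA⟩ := LinearMap.exists_extend B
  rw [Set.image_eq_range]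
  refine ⟨A, fun r hr => ?_, fun u hu hAu => ?_⟩
  · have hr' := LinearMap.congr_fun hA ⟨y r, Submodule.subset_span ⟨⟨r, hr⟩, rfl⟩⟩
    rw [LinearMap.comp_apply, Submodule.subtype_apply] at hr'
    rw [hr', LinearMap.comp_apply,
      hy.repr_eq_single ⟨r, hr⟩ _ rfl, Finsupp.linearCombination_single, one_smul]
  · have hu' : B ⟨u, hu⟩ = 0 := by rw [← hA]; exact hAu
    exact congrArg Subtype.val ((map_eq_zero_iff B hB).1 hu')

theorem IsAdapted.exists_linearMap {W : Type*} [AddCommGroup W] [Module K W] {w : Fin n → W}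
    {c : Matrix (Fin n) (Fin n) K} {P : Finset (Fin n)} (h : IsAdapted x S T c P)
    (hw : LinearIndepOn K w P) :
    ∃ A : E →ₗ[K] W, ∀ (d : ℕ), ∀ f ∈ Submodule.span K (x '' {r ∈ S | (r : ℕ) < d}) ⊓ T,
      A f ∈ Submodule.span K (w '' {r ∈ (P : Set (Fin n)) | (r : ℕ) < d}) ∧ (A f = 0 → f = 0) := by
  obtain ⟨A, hA, hA0⟩ := exists_linearMap_of_linearIndepOn h.linearIndepOn hw
  refine ⟨A, fun d f hf => ⟨?_, hA0 f ?_⟩⟩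
  · refine Submodule.span_mono ?_
      (Submodule.apply_mem_span_image_of_mem_span A (h.span_image_inf_le d hf))
    rintro _ ⟨_, ⟨r, hr, rfl⟩, rfl⟩
    exact ⟨r, hr, (hA r hr.1).symm⟩
  · exact Submodule.span_mono (Set.image_mono (Set.sep_subset _ _)) (h.span_image_inf_le d hf)

end Adapted

section GenericIndependence

theorem finrank_mul_finrank_le_of_vecMulVec_mem {K β ν : Type*} [Field K] [Finite β] [Finite ν]
    {T : Submodule K (β → K)} {N : Submodule K (ν → K)} {P : Submodule K (Matrix β ν K)}
    (h : ∀ y ∈ T, ∀ u ∈ N, vecMulVec y u ∈ P) :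
    Module.finrank K T * Module.finrank K N ≤ Module.finrank K P := by
  let s := Module.finBasis K T
  have hs : LinearIndependent K fun a => (s a : β → K) :=
    s.linearIndependent.map' T.subtype T.ker_subtype
  let L : (Fin (Module.finrank K T) → N) →ₗ[K] P :=
    { toFun w := ⟨∑ a, vecMulVec (s a : β → K) (w a : ν → K),
        P.sum_mem fun a _ => h _ (s a).2 _ (w a).2⟩
      map_add' w w' := Subtype.ext (by simp [vecMulVec_add, Finset.sum_add_distrib])
      map_smul' c w := Subtype.ext (by simp [vecMulVec_smul, Finset.smul_sum]) }
  have hL : LinearMap.ker L = ⊥ := by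
    refine LinearMap.ker_eq_bot'.2 fun w hw => funext fun a => Subtype.ext (funext fun p => ?_)
    have hcol : ∑ a, (w a : ν → K) p • (s a : β → K) = 0 := by
      ext q
      simpa [L, Matrix.sum_apply, vecMulVec_apply, mul_comm] using
        congrFun (congrFun (congrArg Subtype.val hw) q) p
    exact Fintype.linearIndependent_iff.1 hs _ hcol a
  have hle := LinearMap.finrank_le_finrank_of_injective (LinearMap.ker_eq_bot.1 hL)
  rwa [Module.finrank_pi_fintype, Finset.sum_const, Finset.card_fin, smul_eq_mul] at hle

theorem ker_vecMulLinear_ne_top {A β ν : Type*} [CommRing A] [Fintype β] {φ : Matrix β ν A}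
    (hφ : φ ≠ 0) : LinearMap.ker φ.vecMulLinear ≠ ⊤ := by
  classical
  intro h
  refine hφ (Matrix.ext fun q p => ?_)
  have hq : Pi.single q 1 ∈ LinearMap.ker φ.vecMulLinear := h ▸ Submodule.mem_top
  simpa using congrFun (show Pi.single q 1 ᵥ* φ = 0 from hq) p

theorem dotProduct_mulVec_eq_trace {A β ν : Type*} [CommRing A] [Fintype β] [Fintype ν]
    (y : β → A) (η : Matrix β ν A) (u : ν → A) :
    y ⬝ᵥ η *ᵥ u = trace (ηᵀ * vecMulVec y u) := by
  rw [mul_vecMulVec, trace_vecMulVec, mulVec_transpose, dotProduct_mulVec]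

theorem exists_forall_dual_vecMulVec_eq {A β ν : Type*} [CommRing A] [Fintype β] [Fintype ν]
    (g : Module.Dual A (Matrix β ν A)) :
    ∃ η : Matrix β ν A, ∀ y u, g (vecMulVec y u) = y ⬝ᵥ η *ᵥ u := by
  classical
  let B : (β → A) →ₗ[A] (ν → A) →ₗ[A] A := (vecMulVecBilin A A).compr₂ g
  exact ⟨LinearMap.toMatrix₂' A B, fun y u => by
    rw [← Matrix.toLinearMap₂'_apply', Matrix.toLinearMap₂'_toMatrix']; rfl⟩

variable {K ι J ρ β ν : Type*} [Field K] {x : ι → ρ → β → K} {v : J → ν → K} {i : J → ι}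
  {R : J → Finset ρ}

variable (x i R) in
/-- The family of vectors `∑ r ∈ R j, z (j, r) • x (i j) r`; the coefficients `z` are indexed
by the pairs `(j, r)` with `r ∈ R j`. -/
def rowCombination (z : (Σ j, R j) → K) (j : J) : β → K :=
  ∑ r : R j, z ⟨j, r⟩ • x (i j) r

theorem exists_rowCombination_eq {f : J → β → K}
    (hf : ∀ j, f j ∈ Submodule.span K (x (i j) '' R j)) : ∃ z, rowCombination x i R z = f := by
  choose c hc using fun j => (Submodule.mem_span_image_finset_iff_exists_fun K).1 (hf j)
  exact ⟨fun a => c a.1 a.2, funext hc⟩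

theorem rowCombination_mem_span (z : (Σ j, R j) → K) (j : J) :
    rowCombination x i R z j ∈ Submodule.span K (x (i j) '' R j) :=
  Submodule.sum_mem _ fun r _ =>
    Submodule.smul_mem _ _ (Submodule.subset_span (Set.mem_image_of_mem _ r.2))

theorem sum_mul_apply_eq_sum_apply_rowCombination [Fintype J] (z : (Σ j, R j) → K)
    (g : J → Module.Dual K (β → K)) :
    z ⬝ᵥ (fun a => g a.1 (x (i a.1) a.2)) = ∑ j, g j (rowCombination x i R z j) := by
  simp only [dotProduct, Fintype.sum_sigma, rowCombination, map_sum, map_smul, smul_eq_mul]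

variable [Fintype β] [Fintype ν] [Fintype J]

theorem dotProduct_eq_sum_rowCombination_dotProduct (z : (Σ j, R j) → K) (w : J → β → K) :
    z ⬝ᵥ (fun a => x (i a.1) a.2 ⬝ᵥ w a.1) = ∑ j, rowCombination x i R z j ⬝ᵥ w j :=
  sum_mul_apply_eq_sum_apply_rowCombination z fun j => (dotProductBilin K K).flip (w j)

theorem sum_dotProduct_mulVec_eq_zero {f : J → β → K} (h : ∑ j, vecMulVec (f j) (v j) = 0)
    (η : Matrix β ν K) : ∑ j, f j ⬝ᵥ η *ᵥ v j = 0 := by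
  simp only [dotProduct_mulVec_eq_trace, ← trace_sum, ← Matrix.mul_sum, h, Matrix.mul_zero,
    trace_zero]

variable (x v i R) in
/-- The matrices `φ` which, seen as linear functionals, kill all the tensors `x (i j) r ⊗ v j`
with `r ∈ R j`. -/
def annihilator : Submodule K (Matrix β ν K) where
  carrier := {φ | ∀ j, ∀ r ∈ R j, x (i j) r ⬝ᵥ φ *ᵥ v j = 0}
  zero_mem' j r _ := by simp
  add_mem' hφ hψ j r hr := by rw [add_mulVec, dotProduct_add, hφ j r hr, hψ j r hr, add_zero]
  smul_mem' a φ hφ j r hr := by rw [smul_mulVec, dotProduct_smul, hφ j r hr, smul_zero]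

theorem annihilator_ne_bot (hcount : ∑ j, (R j).card ≤ Fintype.card β * Fintype.card ν)
    {f : J → β → K} (hf : ∀ j, f j ∈ Submodule.span K (x (i j) '' R j)) (hf0 : f ≠ 0)
    (hfv : ∑ j, vecMulVec (f j) (v j) = 0) : annihilator x v i R ≠ ⊥ := by
  classical
  obtain ⟨z, rfl⟩ := exists_rowCombination_eq hf
  let E : Matrix β ν K →ₗ[K] ((Σ j, R j) → K) :=
    { toFun φ a := x (i a.1) a.2 ⬝ᵥ φ *ᵥ v a.1
      map_add' φ ψ := funext fun a => by simp [add_mulVec]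
      map_smul' c φ := funext fun a => by simp [smul_mulVec] }
  have hzE (φ) : z ⬝ᵥ E φ = 0 :=
    (dotProduct_eq_sum_rowCombination_dotProduct z fun j => φ *ᵥ v j).trans
      (sum_dotProduct_mulVec_eq_zero hfv φ)
  have hsurj : ¬ Function.Surjective E := by
    intro h
    refine hf0 ?_
    rw [dotProduct_eq_zero z fun w => (h w).elim fun φ hφ => hφ ▸ hzE φ]
    ext
    simp [rowCombination]
  intro hbot
  have hinj : LinearMap.ker E = ⊥ :=
    eq_bot_iff.2 fun φ hφ => hbot.le fun j r hr => congrFun (show E φ = 0 from hφ) ⟨j, r, hr⟩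
  refine hsurj (LinearMap.range_eq_top.1 (Submodule.eq_top_of_finrank_eq (le_antisymm
    (Submodule.finrank_le _) ?_)))
  rw [LinearMap.finrank_range_of_inj (LinearMap.ker_eq_bot.1 hinj)]
  simpa [Module.finrank_matrix] using hcount

variable (x v i R) in
/-- The first variation of the functions `x (i j) r ⬝ᵥ φ *ᵥ v j`, `r ∈ R j`, in the direction
`(dx, dv)`. -/
def firstVariation (φ : Matrix β ν K) :
    (ι → ρ → β → K) × (J → ν → K) →ₗ[K] (Σ j, R j) → K where
  toFun e a := e.1 (i a.1) a.2 ⬝ᵥ φ *ᵥ v a.1 + x (i a.1) a.2 ⬝ᵥ φ *ᵥ e.2 a.1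
  map_add' e e' := funext fun a => by simp [add_dotProduct, mulVec_add, dotProduct_add]; ring
  map_smul' c e := funext fun a => by simp [mulVec_smul]; ring

variable (x v i R) in
/-- The families `rowCombination x i R z` whose coefficients `z` are orthogonal to all first
variations, see `rowCombination_mem_variationKernel`. -/
def variationKernel (φ : Matrix β ν K) : Submodule K (J → β → K) where
  carrier := {f | ∀ j, f j ∈ Submodule.span K (x (i j) '' R j)} ∩
    {f | (∀ j, f j ᵥ* φ = 0) ∧ ∀ A : ι → Module.Dual K (β → K), ∑ j, A (i j) (f j) • φ *ᵥ v j = 0}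
  zero_mem' := ⟨fun _ => zero_mem _, fun _ => zero_vecMul φ, fun A => by simp⟩
  add_mem' hf hg := ⟨fun j => add_mem (hf.1 j) (hg.1 j),
    fun j => by rw [Pi.add_apply, add_vecMul, hf.2.1, hg.2.1, add_zero],
    fun A => by simp [add_smul, Finset.sum_add_distrib, hf.2.2 A, hg.2.2 A]⟩
  smul_mem' c f hf := ⟨fun j => Submodule.smul_mem _ c (hf.1 j),
    fun j => by rw [Pi.smul_apply, smul_vecMul, hf.2.1, smul_zero],
    fun A => by simp [mul_smul, ← Finset.smul_sum, hf.2.2 A]⟩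

theorem rowCombination_mem_variationKernel {φ : Matrix β ν K} {z : (Σ j, R j) → K}
    (hz : ∀ e, z ⬝ᵥ firstVariation x v i R φ e = 0) :
    rowCombination x i R z ∈ variationKernel x v i R φ := by
  classical
  refine ⟨rowCombination_mem_span z, fun j => funext fun p => ?_, fun A => funext fun p => ?_⟩
  · have hvar : firstVariation x v i R φ (0, Pi.single j (Pi.single p 1)) =
        fun a => x (i a.1) a.2 ⬝ᵥ φ *ᵥ (Pi.single j (Pi.single p 1) : J → ν → K) a.1 := by
      ext a; simp [firstVariation]
    have h := hz (0, Pi.single j (Pi.single p 1))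
    rw [hvar, dotProduct_eq_sum_rowCombination_dotProduct z fun j' =>
      φ *ᵥ (Pi.single j (Pi.single p 1) : J → ν → K) j', Finset.sum_eq_single j] at h
    · rwa [Pi.single_eq_same, dotProduct_mulVec, dotProduct_single_one] at h
    · intro j' _ hj'; simp [hj']
    · simp
  · have hvar : firstVariation x v i R φ (fun i r => Pi.single p (A i (x i r)), 0) =
        fun a => ((φ *ᵥ v a.1) p • A (i a.1)) (x (i a.1) a.2) := by
      ext a; simp [firstVariation, mul_comm]
    have h := hz (fun i r => Pi.single p (A i (x i r)), 0)
    rw [hvar, sum_mul_apply_eq_sum_apply_rowCombination z fun j => (φ *ᵥ v j) p • A (i j)] at h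
    simpa [mul_comm] using h

omit [Fintype J] in
theorem firstVariation_comp_derivation {k : Type*} [CommRing k] [Algebra k K]
    (D : Derivation k K K) {φ : Matrix β ν K} (hφ : φ ∈ annihilator x v i R) :
    firstVariation x v i R φ (fun i r => D ∘ x i r, fun j => D ∘ v j) =
      -fun a => x (i a.1) a.2 ⬝ᵥ φ.map D *ᵥ v a.1 := by
  funext a
  have h := derivation_dotProduct_mulVec D (x (i a.1) a.2) φ (v a.1)
  rw [hφ a.1 a.2 a.2.2, map_zero] at h
  rw [Pi.neg_apply, eq_neg_iff_add_eq_zero, h]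
  simp only [firstVariation, LinearMap.coe_mk, AddHom.coe_mk]
  ring

theorem mem_range_firstVariation {φ η : Matrix β ν K}
    (h : ∀ f ∈ variationKernel x v i R φ, ∑ j, f j ⬝ᵥ η *ᵥ v j = 0) :
    (fun a => x (i a.1) a.2 ⬝ᵥ η *ᵥ v a.1) ∈ LinearMap.range (firstVariation x v i R φ) := by
  classical
  by_contra hnot
  obtain ⟨l, hl, hker⟩ := Submodule.exists_le_ker_of_notMem hnot
  obtain ⟨z, rfl⟩ := (dotProductEquiv K _).surjective l
  refine hl ?_
  rw [dotProductEquiv_apply_apply,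
    dotProduct_eq_sum_rowCombination_dotProduct z fun j => η *ᵥ v j]
  exact h _ (rowCombination_mem_variationKernel fun e => hker ⟨e, rfl⟩)

theorem mem_variationKernel_of_sum_vecMulVec_eq_zero {k : Type*} [CommRing k] [Algebra k K]
    (hD : ∀ (dx : ι → ρ → β → K) (dv : J → ν → K), ∃ D : Derivation k K K,
      (∀ i r, D ∘ x i r = dx i r) ∧ ∀ j, D ∘ v j = dv j)
    {φ : Matrix β ν K} (hφ : φ ∈ annihilator x v i R) {f : J → β → K}
    (hf : ∀ j, f j ∈ Submodule.span K (x (i j) '' R j))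
    (hfv : ∑ j, vecMulVec (f j) (v j) = 0) :
    f ∈ variationKernel x v i R φ := by
  obtain ⟨z, rfl⟩ := exists_rowCombination_eq hf
  refine rowCombination_mem_variationKernel fun ⟨dx, dv⟩ => ?_
  obtain ⟨D, hDx, hDv⟩ := hD dx dv
  have hvar := firstVariation_comp_derivation D hφ
  simp only [hDx, hDv] at hvar
  rw [hvar, dotProduct_neg, dotProduct_eq_sum_rowCombination_dotProduct z fun j => φ.map D *ᵥ v j,
    sum_dotProduct_mulVec_eq_zero hfv, neg_zero]

theorem exists_mem_variationKernel_sum_vecMulVec_eq {k : Type*} [CommRing k] [Algebra k K]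
    (hD : ∀ (dx : ι → ρ → β → K) (dv : J → ν → K), ∃ D : Derivation k K K,
      (∀ i r, D ∘ x i r = dx i r) ∧ ∀ j, D ∘ v j = dv j)
    {φ : Matrix β ν K} (hφ : φ ∈ annihilator x v i R)
    (hgen : ∀ ψ ∈ annihilator x v i R, ∀ y u, y ᵥ* φ = 0 → φ *ᵥ u = 0 → y ⬝ᵥ ψ *ᵥ u = 0)
    {y : β → K} {u : ν → K} (hy : y ᵥ* φ = 0) (hu : φ *ᵥ u = 0) :
    ∃ f ∈ variationKernel x v i R φ, ∑ j, vecMulVec (f j) (v j) = vecMulVec y u := by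
  let μ : (J → β → K) →ₗ[K] Matrix β ν K :=
    ∑ j, (vecMulVecBilin K K).flip (v j) ∘ₗ LinearMap.proj j
  have hμ (f) : μ f = ∑ j, vecMulVec (f j) (v j) := by simp [μ, vecMulVecBilin]
  by_contra! hnot
  have hnotMem : vecMulVec y u ∉ (variationKernel x v i R φ).map μ := by
    rintro ⟨f, hf, h⟩
    exact hnot f hf ((hμ f).symm.trans h)
  obtain ⟨g, hgyu, hg⟩ := Submodule.exists_le_ker_of_notMem hnotMem
  obtain ⟨η, hη⟩ := exists_forall_dual_vecMulVec_eq g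
  have hrange : (fun a : Σ j, R j => -(x (i a.1) a.2 ⬝ᵥ η *ᵥ v a.1)) ∈
      LinearMap.range (firstVariation x v i R φ) := by
    refine neg_mem (mem_range_firstVariation fun f hf => ?_)
    simp only [← hη, ← map_sum, ← hμ]
    exact hg (Submodule.mem_map_of_mem hf)
  obtain ⟨⟨dx, dv⟩, he⟩ := hrange
  obtain ⟨D, hDx, hDv⟩ := hD dx dv
  have hψ : φ.map D - η ∈ annihilator x v i R := by
    intro j r hr
    have hvar := firstVariation_comp_derivation D hφ
    simp only [hDx, hDv, he] at hvar
    rw [sub_mulVec, dotProduct_sub, sub_eq_zero]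
    exact neg_injective (congrFun hvar ⟨j, r, hr⟩).symm
  have hDφ : y ⬝ᵥ φ.map D *ᵥ u = 0 := by
    have h := derivation_dotProduct_mulVec D y φ u
    rw [hu, dotProduct_zero, dotProduct_zero, dotProduct_mulVec y φ, hy, zero_dotProduct,
      map_zero, zero_add, add_zero] at h
    exact h.symm
  refine hgyu ?_
  have h := hgen _ hψ y u hy hu
  rwa [sub_mulVec, dotProduct_sub, hDφ, zero_sub, neg_eq_zero, ← hη] at h

theorem mulVec_sum_vecMulVec_eq_zero {κ : Type*} {φ : Matrix β ν K} {f : J → β → K}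
    (hf : f ∈ variationKernel x v i R φ) (A : ι → (β → K) →ₗ[K] (κ → K)) (q : κ) :
    φ *ᵥ (∑ j, vecMulVec (A (i j) (f j)) (v j)) q = 0 := by
  have hrow : (∑ j, vecMulVec (A (i j) (f j)) (v j)) q = ∑ j, A (i j) (f j) q • v j := by
    ext p
    simp [Matrix.sum_apply, vecMulVec_apply]
  rw [hrow, mulVec_sum]
  simpa [mulVec_smul] using hf.2.2 fun i => LinearMap.proj q ∘ₗ A i

theorem finrank_variationKernel_le {κ : Type*} [Fintype κ] {φ : Matrix β ν K}
    {A : ι → (β → K) →ₗ[K] (κ → K)}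
    (hA : ∀ f ∈ variationKernel x v i R φ, ∑ j, vecMulVec (A (i j) (f j)) (v j) = 0 → f = 0) :
    Module.finrank K (variationKernel x v i R φ) ≤
      Fintype.card κ * Module.finrank K (LinearMap.ker φ.mulVecLin) := by
  let L : variationKernel x v i R φ →ₗ[K] (κ → LinearMap.ker φ.mulVecLin) :=
    { toFun f q := ⟨(∑ j, vecMulVec (A (i j) (f.1 j)) (v j)) q,
        mulVec_sum_vecMulVec_eq_zero f.2 A q⟩
      map_add' f g := by
        ext q p
        simp [Matrix.sum_apply, vecMulVec_apply, add_mul, Finset.sum_add_distrib]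
      map_smul' c f := by
        ext q p
        simp [Matrix.sum_apply, vecMulVec_apply, Finset.mul_sum] }
  have hL : LinearMap.ker L = ⊥ := LinearMap.ker_eq_bot'.2 fun f hf => Subtype.ext
    (hA f f.2 (funext fun q => congrArg Subtype.val (congrFun hf q)))
  refine (LinearMap.finrank_le_finrank_of_injective (LinearMap.ker_eq_bot.1 hL)).trans ?_
  rw [Module.finrank_pi_fintype, Finset.sum_const, Finset.card_univ, smul_eq_mul]

/-- The inductive step: the tensors `x (i j) r ⊗ v j` are independent if, for each proper subspace
`T`, the combinations with left factors in `T` can be mapped to an independent system. -/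
theorem eq_zero_of_sum_vecMulVec_eq_zero [Infinite K] {k : Type*} [CommRing k] [Algebra k K]
    (hD : ∀ (dx : ι → ρ → β → K) (dv : J → ν → K), ∃ D : Derivation k K K,
      (∀ i r, D ∘ x i r = dx i r) ∧ ∀ j, D ∘ v j = dv j)
    (hcount : ∑ j, (R j).card ≤ Fintype.card β * Fintype.card ν)
    (hT : ∀ T : Submodule K (β → K), T ≠ ⊤ →
      ∃ A : ι → (β → K) →ₗ[K] (Fin (Module.finrank K T) → K), ∀ f : J → β → K,
        (∀ j, f j ∈ Submodule.span K (x (i j) '' R j) ⊓ T) →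
        ∑ j, vecMulVec (A (i j) (f j)) (v j) = 0 → f = 0)
    {f : J → β → K} (hf : ∀ j, f j ∈ Submodule.span K (x (i j) '' R j))
    (hfv : ∑ j, vecMulVec (f j) (v j) = 0) : f = 0 := by
  classical
  by_contra hf0
  obtain ⟨φ, hφ, hgen⟩ := exists_mem_forall_dotProduct_mulVec_eq_zero (annihilator x v i R)
  have hφ0 : φ ≠ 0 := by
    rintro rfl
    obtain ⟨ψ, hψ, hψ0⟩ := (annihilator x v i R).ne_bot_iff.1 (annihilator_ne_bot hcount hf hf0 hfv)
    refine hψ0 (Matrix.ext fun q p => ?_)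
    simpa using hgen ψ hψ (Pi.single q 1) (Pi.single p 1) (vecMul_zero _) (zero_mulVec _)
  obtain ⟨A, hA⟩ := hT (LinearMap.ker φ.vecMulLinear) (ker_vecMulLinear_ne_top hφ0)
  let μ : variationKernel x v i R φ →ₗ[K] Matrix β ν K :=
    { toFun f := ∑ j, vecMulVec (f.1 j) (v j)
      map_add' f g := by simp [add_vecMulVec, Finset.sum_add_distrib]
      map_smul' c f := by simp [smul_vecMulVec, Finset.smul_sum] }
  have hlow : Module.finrank K (LinearMap.ker φ.vecMulLinear) *
      Module.finrank K (LinearMap.ker φ.mulVecLin) ≤ Module.finrank K (LinearMap.range μ) :=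
    finrank_mul_finrank_le_of_vecMulVec_mem fun y hy u hu =>
      have ⟨f, hf, h⟩ := exists_mem_variationKernel_sum_vecMulVec_eq hD hφ hgen hy hu
      ⟨⟨f, hf⟩, h⟩
  have hup := finrank_variationKernel_le (A := A)
    fun f (hf : f ∈ variationKernel x v i R φ) h => hA f (fun j => ⟨hf.1 j, hf.2.1 j⟩) h
  rw [Fintype.card_fin] at hup
  have hker : LinearMap.ker μ = ⊥ := by
    rw [← Submodule.finrank_eq_zero]
    have := μ.finrank_range_add_finrank_ker
    omega
  have hmem := mem_variationKernel_of_sum_vecMulVec_eq_zero hD hφ hf hfv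
  exact hf0 (congrArg Subtype.val (LinearMap.ker_eq_bot'.1 hker ⟨f, hmem⟩ hfv))

end GenericIndependence

section LeadingMinors

variable {n : ℕ} {A B : Type*} [CommRing A] [CommRing B]

/-- The leading principal minor of order `d`; for `n ≤ d` it is the determinant. -/
def lead (d : ℕ) (g : Matrix (Fin n) (Fin n) A) : A :=
  (g.toSquareBlockProp fun r => (r : ℕ) < d).det

theorem card_subtype_val_lt {d : ℕ} (hd : d ≤ n) :
    Fintype.card {r : Fin n // (r : ℕ) < d} = d := by
  rw [Fintype.card_subtype, Fin.card_filter_val_lt, min_eq_right hd]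

theorem lead_map (f : A →+* B) (d : ℕ) (g : Matrix (Fin n) (Fin n) A) :
    lead d (g.map f) = f (lead d g) :=
  (RingHom.map_det f _).symm

theorem lead_smul {d : ℕ} (hd : d ≤ n) (a : A) (g : Matrix (Fin n) (Fin n) A) :
    lead d (a • g) = a ^ d * lead d g := by
  have h := det_smul (g.toSquareBlockProp fun r => (r : ℕ) < d) a
  rwa [card_subtype_val_lt hd] at h

theorem lead_lower_mul (d : ℕ) {c : Matrix (Fin n) (Fin n) A}
    (hc : ∀ r r', r < r' → c r r' = 0) (g : Matrix (Fin n) (Fin n) A) :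
    lead d (c * g) = (∏ r : {r : Fin n // (r : ℕ) < d}, c r r) * lead d g := by
  have hblock : (c * g).toSquareBlockProp (fun r => (r : ℕ) < d) =
      c.toSquareBlockProp (fun r => (r : ℕ) < d) * g.toSquareBlockProp fun r => (r : ℕ) < d := by
    ext r q
    simp only [toSquareBlockProp_def, of_apply, mul_apply]
    rw [← Fintype.sum_subtype_add_sum_subtype (fun k : Fin n => (k : ℕ) < d), add_eq_left]
    refine Finset.sum_eq_zero fun k _ => ?_
    rw [hc r k (r.2.trans_le (not_lt.1 k.2)), zero_mul]
  have hdet : (c.toSquareBlockProp fun r => (r : ℕ) < d).det =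
      ∏ r : {r : Fin n // (r : ℕ) < d}, c r r :=
    det_of_isLowerTriangular _ fun r r' hr => hc r r' hr
  rw [lead, hblock, det_mul, hdet, lead]

end LeadingMinors

section LeadSum

open MvPolynomial

variable {k : Type*} [Field k] {n m N : ℕ} {ι J Λ : Type*} [Fintype J] [Fintype Λ]

/-- A function of a family of matrices `g`: a linear combination, with coefficients `c`, of products
of `m`-th powers of leading minors of translates `g (i j) * X l (i j)`. Up to scalars these are the
`s`-fold matrix coefficients against highest weight functionals of highest weight `m • λ`, where
`λ` has one fundamental weight `d j` for each `j`. -/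
def leadSum (m : ℕ) (i : J → ι) (d : J → ℕ) (c : Λ → k)
    (X : Λ → ι → Matrix (Fin n) (Fin n) k)
    {A : Type*} [CommRing A] [Algebra k A] (g : ι → Matrix (Fin n) (Fin n) A) : A :=
  ∑ l, algebraMap k A (c l) *
    ∏ j, lead (d j) (g (i j) * (X l (i j)).map (algebraMap k A)) ^ m

/-- Invariance of `leadSum m i d c X` under the diagonal right action of `SL(n, k)`. -/
def LeadSumInvariant (m : ℕ) (i : J → ι) (d : J → ℕ) (c : Λ → k)
    (X : Λ → ι → Matrix (Fin n) (Fin n) k) : Prop :=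
  ∀ (g : ι → Matrix (Fin n) (Fin n) k) (h : Matrix (Fin n) (Fin n) k),
    (∀ i₀, (g i₀).det = 1) → h.det = 1 →
      leadSum m i d c X (fun i₀ => g i₀ * h) = leadSum m i d c X g

variable (i : J → ι) (d : J → ℕ) (c : Λ → k) (X : Λ → ι → Matrix (Fin n) (Fin n) k)
variable {A B : Type*} [CommRing A] [Algebra k A] [CommRing B] [Algebra k B]

theorem leadSum_map (f : A →ₐ[k] B) (g : ι → Matrix (Fin n) (Fin n) A) :
    leadSum m i d c X (fun i₀ => (g i₀).map f) = f (leadSum m i d c X g) := by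
  have hmul (l : Λ) (j : J) : (g (i j)).map f * (X l (i j)).map (algebraMap k B) =
      (g (i j) * (X l (i j)).map (algebraMap k A)).map (f : A →+* B) := by
    rw [Matrix.map_mul, Matrix.map_map, ← RingHom.coe_comp, AlgHom.comp_algebraMap]
    rfl
  simp only [leadSum, hmul, lead_map, map_sum, map_mul, map_prod, map_pow, AlgHom.commutes]
  rfl

theorem leadSum_lower_mul {b : ι → Matrix (Fin n) (Fin n) A}
    (hb : ∀ i₀ r r', r < r' → b i₀ r r' = 0) (g : ι → Matrix (Fin n) (Fin n) A) :
    leadSum m i d c X (fun i₀ => b i₀ * g i₀) =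
      (∏ j, ∏ r : {r : Fin n // (r : ℕ) < d j}, b (i j) r r) ^ m * leadSum m i d c X g := by
  simp only [leadSum, Finset.mul_sum]
  refine Finset.sum_congr rfl fun l _ => ?_
  simp only [Matrix.mul_assoc, lead_lower_mul _ (hb _), mul_pow, Finset.prod_mul_distrib,
    Finset.prod_pow]
  ring

theorem leadSum_smul {d : J → ℕ} (hd : ∀ j, d j ≤ n) (a : ι → A)
    (g : ι → Matrix (Fin n) (Fin n) A) :
    leadSum m i d c X (fun i₀ => a i₀ • g i₀) =
      (∏ j, a (i j) ^ d j) ^ m * leadSum m i d c X g := by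
  simp only [leadSum, Finset.mul_sum]
  refine Finset.sum_congr rfl fun l _ => ?_
  simp only [Matrix.smul_mul, lead_smul (hd _), mul_pow, Finset.prod_mul_distrib,
    Finset.prod_pow]
  ring

theorem exists_smul_det_eq_one [IsAlgClosed k] [NeZero n] {g : Matrix (Fin n) (Fin n) k}
    (hg : g.det ≠ 0) :
    ∃ (a : k) (g' : Matrix (Fin n) (Fin n) k), g'.det = 1 ∧ g = a • g' ∧ a ^ n = g.det := by
  obtain ⟨a, ha⟩ := IsAlgClosed.exists_pow_nat_eq g.det (NeZero.pos n)
  have ha0 : a ≠ 0 := by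
    rintro rfl
    exact hg (by rw [← ha, zero_pow (NeZero.ne n)])
  refine ⟨a, a⁻¹ • g, ?_, (smul_inv_smul₀ ha0 g).symm, ha⟩
  rw [det_smul, Fintype.card_fin, inv_pow, ha, inv_mul_cancel₀ hg]

variable {i d c X}

theorem LeadSumInvariant.mul_right_of_det_ne_zero [IsAlgClosed k] [NeZero n] (hd : ∀ j, d j ≤ n)
    (hN : ∑ j, d j = n * N) (hSL : LeadSumInvariant m i d c X)
    {g : ι → Matrix (Fin n) (Fin n) k} {h : Matrix (Fin n) (Fin n) k}
    (hg : ∀ i₀, (g i₀).det ≠ 0) (hh : h.det ≠ 0) :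
    leadSum m i d c X (fun i₀ => g i₀ * h) = h.det ^ (m * N) * leadSum m i d c X g := by
  choose a g' hg' hgg' _ using fun i₀ => exists_smul_det_eq_one (hg i₀)
  obtain ⟨e, h', hh', hhh', he⟩ := exists_smul_det_eq_one hh
  have hgh : (fun i₀ => g i₀ * h) = fun i₀ => e • (a i₀ • (g' i₀ * h')) := by
    funext i₀
    rw [hgg' i₀, hhh', Matrix.mul_smul, Matrix.smul_mul]
  have hscalar : (∏ j, e ^ d j) ^ m = h.det ^ (m * N) := by
    rw [Finset.prod_pow_eq_pow_sum, hN, ← he]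
    ring
  rw [hgh, leadSum_smul i c X hd fun _ => e, leadSum_smul i c X hd a, hSL g' h' hg' hh',
    ← leadSum_smul i c X hd a, ← funext hgg', hscalar]

/-- The family, indexed by `κ`, of square matrices whose entries are independent variables. -/
noncomputable def genericFamily (k : Type*) [CommSemiring k] (n : ℕ) {κ : Type*} (a : κ) :
    Matrix (Fin n) (Fin n) (MvPolynomial (κ × Fin n × Fin n) k) :=
  of fun r q => MvPolynomial.X (a, r, q)

theorem map_genericFamily {κ : Type*} (g : κ → Matrix (Fin n) (Fin n) A)
    (a : κ) :
    (genericFamily k n a).map (aeval (R := k) fun w : κ × Fin n × Fin n => g w.1 w.2.1 w.2.2) =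
      g a := by
  ext r q
  simp [genericFamily]

theorem det_genericFamily_ne_zero {κ : Type*} (a : κ) : (genericFamily k n a).det ≠ 0 := by
  intro h0
  have h1 := congrArg
    (aeval fun w : κ × Fin n × Fin n => (1 : Matrix (Fin n) (Fin n) k) w.2.1 w.2.2) h0
  rw [AlgHom.map_det, AlgHom.mapMatrix_apply, map_genericFamily fun _ => 1, det_one, map_zero] at h1
  exact one_ne_zero h1

theorem eq_of_aeval_eq_of_det_ne_zero [Infinite k] {κ : Type*} [Finite κ]
    {p p' : MvPolynomial (κ × Fin n × Fin n) k}
    (h : ∀ g : κ → Matrix (Fin n) (Fin n) k, (∀ a, (g a).det ≠ 0) →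
      aeval (fun w => g w.1 w.2.1 w.2.2) p = aeval (fun w => g w.1 w.2.1 w.2.2) p') :
    p = p' := by
  cases nonempty_fintype κ
  refine mul_left_cancel₀ (Finset.prod_ne_zero_iff.2 fun a (_ : a ∈ Finset.univ) =>
    det_genericFamily_ne_zero (k := k) (n := n) a) (MvPolynomial.funext fun pt => ?_)
  let g : κ → Matrix (Fin n) (Fin n) k := fun a => of fun r q => pt (a, r, q)
  have hdet (a : κ) : aeval pt (genericFamily k n a).det = (g a).det := by
    rw [AlgHom.map_det, AlgHom.mapMatrix_apply]
    exact congrArg det (map_genericFamily g a)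
  simp only [← aeval_eq_eval, map_mul, map_prod, hdet]
  by_cases hg : ∀ a, (g a).det ≠ 0
  · exact congrArg _ (h g hg)
  · obtain ⟨a, ha⟩ := not_forall_not.1 hg
    rw [Finset.prod_eq_zero (Finset.mem_univ a) ha, zero_mul, zero_mul]

theorem LeadSumInvariant.mul_right [IsAlgClosed k] [NeZero n] [Finite ι] (hd : ∀ j, d j ≤ n)
    (hN : ∑ j, d j = n * N) (hSL : LeadSumInvariant m i d c X)
    (g : ι → Matrix (Fin n) (Fin n) A) (h : Matrix (Fin n) (Fin n) A) :
    leadSum m i d c X (fun i₀ => g i₀ * h) = h.det ^ (m * N) * leadSum m i d c X g := by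
  have hgeneric :
      leadSum m i d c X (fun i₀ => genericFamily k n (some i₀) * genericFamily k n none) =
        (genericFamily k n none).det ^ (m * N) *
          leadSum m i d c X fun i₀ => genericFamily k n (some i₀) := by
    refine eq_of_aeval_eq_of_det_ne_zero fun g hg => ?_
    simp only [map_mul, map_pow, AlgHom.map_det, AlgHom.mapMatrix_apply, ← leadSum_map,
      Matrix.map_mul, map_genericFamily g]
    exact hSL.mul_right_of_det_ne_zero hd hN (fun i₀ => hg (some i₀)) (hg none)
  let F : Option ι → Matrix (Fin n) (Fin n) A := fun o => o.elim h g
  have hspec := congrArg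
    (aeval (R := k) fun w : Option ι × Fin n × Fin n => F w.1 w.2.1 w.2.2) hgeneric
  rw [map_mul, map_pow, AlgHom.map_det, AlgHom.mapMatrix_apply, ← leadSum_map, ← leadSum_map]
    at hspec
  simp only [Matrix.map_mul, map_genericFamily F] at hspec
  exact hspec

end LeadSum

section WeightInequality

variable {k : Type*} [Field k] {n m N : ℕ} {ι J Λ : Type*} [Fintype J] [Fintype Λ]
variable {i : J → ι} {d : J → ℕ} {c : Λ → k} {X : Λ → ι → Matrix (Fin n) (Fin n) k}

theorem prod_subtype_val_lt_ite {M : Type*} [CommMonoid M] (d : ℕ) (S : Finset (Fin n)) (a : M) :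
    ∏ r : {r : Fin n // (r : ℕ) < d}, (if (r : Fin n) ∈ S then a else 1) =
      a ^ (S.filter fun r : Fin n => (r : ℕ) < d).card := by
  rw [← Finset.prod_subtype (Finset.univ.filter fun r : Fin n => (r : ℕ) < d) (by simp)
    (fun r => if r ∈ S then a else 1), Finset.prod_ite, Finset.prod_const_one, mul_one,
    Finset.prod_const, Finset.filter_comm, Finset.filter_univ_mem]

theorem exists_map_C_mul_diagonal_eq {A : Type*} [CommRing A] {b : ℕ} {S : Finset (Fin n)}
    {g : Matrix (Fin n) (Fin n) A} (hg : ∀ r ∈ S, ∀ q : Fin n, b ≤ (q : ℕ) → g r q = 0) :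
    ∃ g' : Matrix (Fin n) (Fin n) (Polynomial A),
      g.map Polynomial.C * diagonal (fun q : Fin n => if (q : ℕ) < b then Polynomial.X else 1) =
        diagonal (fun r => if r ∈ S then Polynomial.X else 1) * g' := by
  refine ⟨of fun r q => Polynomial.C (g r q) *
    if r ∉ S ∧ (q : ℕ) < b then Polynomial.X else 1, ?_⟩
  ext1 r q
  rw [mul_diagonal, diagonal_mul, map_apply, of_apply]
  by_cases hr : r ∈ S <;> by_cases hq : (q : ℕ) < b
  · simp [hr, hq, Polynomial.X_mul_C]
  · rw [hg r hr q (not_lt.1 hq), map_zero, zero_mul, zero_mul, mul_zero]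
  · simp [hr, hq]
  · simp [hr, hq]

/-- Let `t` act on the right as the one-parameter subgroup scaling the first `b` columns. The rows
in `S` are scaled by `t`, so the degree in `t` of `leadSum` is at least the left-hand side times
`m`, whereas by invariance it equals `b * (m * N)`. -/
theorem sum_card_le_of_leadSum_ne_zero {A : Type*} [CommRing A] [IsDomain A] [Algebra k A]
    (hm : 0 < m)
    (hR : ∀ (g : ι → Matrix (Fin n) (Fin n) (Polynomial A)) (h : Matrix (Fin n) (Fin n) _),
      leadSum m i d c X (fun i₀ => g i₀ * h) = h.det ^ (m * N) * leadSum m i d c X g)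
    {b : ℕ} (hb : b ≤ n) {S : ι → Finset (Fin n)} {g : ι → Matrix (Fin n) (Fin n) A}
    (hg : ∀ i₀, ∀ r ∈ S i₀, ∀ q : Fin n, b ≤ (q : ℕ) → g i₀ r q = 0)
    (hQ : leadSum m i d c X g ≠ 0) :
    ∑ j, ((S (i j)).filter fun r : Fin n => (r : ℕ) < d j).card ≤ b * N := by
  choose g' hg' using fun i₀ => exists_map_C_mul_diagonal_eq (hg i₀)
  have hdet : (diagonal fun q : Fin n => if (q : ℕ) < b then (Polynomial.X : Polynomial A)
      else 1).det = Polynomial.X ^ b := by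
    rw [det_diagonal, Finset.prod_ite, Finset.prod_const_one, mul_one, Finset.prod_const,
      Fin.card_filter_val_lt, min_eq_right hb]
  have hdegree := hR (fun i₀ => (g i₀).map Polynomial.C)
    (diagonal fun q => if (q : ℕ) < b then Polynomial.X else 1)
  have hC : leadSum m i d c X (fun i₀ => (g i₀).map Polynomial.C) =
      Polynomial.C (leadSum m i d c X g) :=
    leadSum_map i d c X (Polynomial.CAlgHom (R := k)) g
  simp only [hg', hdet, hC] at hdegree
  rw [leadSum_lower_mul i d c X fun i₀ r r' hr => diagonal_apply_ne _ hr.ne] at hdegree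
  simp only [diagonal_apply_eq, prod_subtype_val_lt_ite] at hdegree
  rw [Finset.prod_pow_eq_pow_sum, ← pow_mul, ← pow_mul] at hdegree
  have hdvd : (Polynomial.X : Polynomial A) ^
      ((∑ j, ((S (i j)).filter fun r : Fin n => (r : ℕ) < d j).card) * m) ∣
        Polynomial.X ^ (b * (m * N)) * Polynomial.C (leadSum m i d c X g) :=
    ⟨_, hdegree.symm⟩
  have hcoeff := Polynomial.X_pow_dvd_iff.1 hdvd (b * (m * N))
  rw [Polynomial.coeff_mul_C, Polynomial.coeff_X_pow_self, one_mul] at hcoeff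
  refine Nat.le_of_mul_le_mul_right (not_lt.1 fun hlt => hQ (hcoeff ?_)) hm
  rwa [show b * (m * N) = b * N * m by ring]

end WeightInequality

section GenericPoint

theorem exists_det_ne_zero_vecMul_eq_zero {K : Type*} [Field K] {n : ℕ}
    (T : Submodule K (Fin n → K)) :
    ∃ h : Matrix (Fin n) (Fin n) K, h.det ≠ 0 ∧
      ∀ y ∈ T, ∀ q : Fin n, Module.finrank K T ≤ (q : ℕ) → (y ᵥ* h) q = 0 := by
  have hb : Module.finrank K T ≤ n := by simpa using Submodule.finrank_le T
  let E := Function.ExtendByZero.linearMap K (Fin.castLE hb) ∘ₗ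
    (Module.finBasis K T).equivFun.toLinearMap
  have hE : Function.Injective E :=
    (Function.extend_injective (Fin.castLE_injective hb) _).comp
      (Module.finBasis K T).equivFun.injective
  obtain ⟨e, he⟩ := Submodule.exists_linearEquiv_restrict_eq (LinearEquiv.ofInjective E hE)
  let h : Matrix (Fin n) (Fin n) K := LinearMap.toMatrixRight' e.toLinearMap
  have hvecMul (y : Fin n → K) : y ᵥ* h = e y :=
    LinearMap.congr_fun (LinearMap.toMatrixRight'.symm_apply_apply e.toLinearMap) y
  refine ⟨h, ?_, fun y hy q hq => ?_⟩
  · rw [← isUnit_iff_ne_zero, ← isUnit_iff_isUnit_det, ← vecMul_injective_iff_isUnit]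
    exact fun y y' hyy' => e.injective ((hvecMul y).symm.trans (hyy'.trans (hvecMul y')))
  · rw [hvecMul, ← he ⟨y, hy⟩]
    exact Function.extend_apply' _ _ _ fun ⟨q', hq'⟩ => hq.not_gt (hq' ▸ q'.2)

end GenericPoint

section GenericMatrices

open MvPolynomial

/-- The variables: entries of a family of `n × n` matrices and of a family of vectors in dimension
`N`. -/
abbrev Vars (ι J : Type*) (n N : ℕ) := (ι × Fin n × Fin n) ⊕ (J × Fin N)

/-- The generic family of matrices whose rows in `S` are supported in the first `b` columns. -/
noncomputable def genMatrix (k J : Type*) [CommSemiring k] {ι : Type*} {n : ℕ} (N b : ℕ)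
    (S : ι → Finset (Fin n)) (i₀ : ι) :
    Matrix (Fin n) (Fin n) (MvPolynomial (Vars ι J n N) k) :=
  of fun r q => if r ∈ S i₀ ∧ b ≤ (q : ℕ) then 0 else MvPolynomial.X (Sum.inl (i₀, r, q))

/-- The first `b` entries of the rows of the generic family of matrices. -/
noncomputable def genRow (k J K : Type*) [CommRing k] [CommRing K] {ι : Type*} {n b : ℕ} (N : ℕ)
    [Algebra (MvPolynomial (Vars ι J n N) k) K] (hb : b ≤ n) (i₀ : ι) (r : Fin n) (q : Fin b) : K :=
  algebraMap (MvPolynomial (Vars ι J n N) k) K (MvPolynomial.X (Sum.inl (i₀, r, Fin.castLE hb q)))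

/-- The generic family of vectors. -/
noncomputable def genVec (k ι K : Type*) [CommRing k] [CommRing K] {J : Type*} {N : ℕ} (n : ℕ)
    [Algebra (MvPolynomial (Vars ι J n N) k) K] (j : J) (p : Fin N) : K :=
  algebraMap (MvPolynomial (Vars ι J n N) k) K (MvPolynomial.X (Sum.inr (j, p)))

variable {k K : Type*} [Field k] [Field K] {n m N b : ℕ} {ι J Λ : Type*}
variable [Algebra (MvPolynomial (Vars ι J n N) k) K]
theorem extendByZero_genRow (hb : b ≤ n) {S : ι → Finset (Fin n)} {i₀ : ι} {r : Fin n}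
    (hr : r ∈ S i₀) :
    Function.ExtendByZero.linearMap K (Fin.castLE hb) (genRow k J K N hb i₀ r) =
      (genMatrix k J N b S i₀).map (algebraMap _ K) r := by
  ext q
  by_cases hq : (q : ℕ) < b
  · simpa [genMatrix, genRow, hq.not_ge] using
      (Fin.castLE_injective hb).extend_apply (genRow k J K N hb i₀ r) 0 ⟨q, hq⟩
  · have hq' : ¬∃ q', Fin.castLE hb q' = q := fun ⟨q', h⟩ => hq (h ▸ q'.2)
    simp [genMatrix, Function.extend_apply' _ _ _ hq', hr, not_lt.1 hq]

theorem mul_map_genMatrix_row (hb : b ≤ n) {S : ι → Finset (Fin n)} {i₀ : ι} {r : Fin n}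
    {c : Matrix (Fin n) (Fin n) K} (hc : ∀ r' ∉ S i₀, c r r' = 0) :
    (c * (genMatrix k J N b S i₀).map (algebraMap _ K)) r =
      Function.ExtendByZero.linearMap K (Fin.castLE hb)
        (rowTransform c (genRow k J K N hb i₀) r) := by
  rw [mul_apply_eq_vecMul, vecMul_eq_sum, rowTransform, map_sum]
  refine Finset.sum_congr rfl fun r' _ => ?_
  by_cases hr' : r' ∈ S i₀
  · rw [map_smul, extendByZero_genRow hb hr']
  · rw [hc r' hr', zero_smul, zero_smul, map_zero]

variable [IsFractionRing (MvPolynomial (Vars ι J n N) k) K]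

theorem linearIndepOn_genRow (hb : b ≤ n) {S : Finset (Fin n)} (hS : S.card = b) (i₀ : ι) :
    LinearIndepOn K (genRow k J K N hb i₀) S := by
  let e : Fin b ≃ S := (S.equivFinOfCardEq hS).symm
  let φ : Fin b × Fin b → Vars ι J n N := fun w => Sum.inl (i₀, e w.1, Fin.castLE hb w.2)
  have hφ : Function.Injective φ := fun w w' h => by
    simpa [φ, Prod.ext_iff, Subtype.ext_iff.symm] using h
  let f : MvPolynomial (Fin b × Fin b) k →+* K :=
    (algebraMap (MvPolynomial (Vars ι J n N) k) _).comp (rename φ : _ →ₐ[k] _)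
  have hf : Function.Injective f :=
    (IsFractionRing.injective _ K).comp (rename_injective φ hφ)
  have hdet : ((mvPolynomialX (Fin b) (Fin b) k).map f).det ≠ 0 := by
    rw [← RingHom.mapMatrix_apply, ← RingHom.map_det]
    exact (map_ne_zero_iff f hf).2 (det_mvPolynomialX_ne_zero (Fin b) k)
  have hrows :
      genRow k J K N hb i₀ ∘ Subtype.val ∘ e = (mvPolynomialX (Fin b) (Fin b) k).map f := by
    ext r q
    simp [f, φ, genRow]
  exact (linearIndependent_equiv' e hrows).1 (linearIndependent_rows_of_det_ne_zero hdet)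

theorem span_genRow (hb : b ≤ n) {S : Finset (Fin n)} (hS : S.card = b) (i₀ : ι) :
    Submodule.span K (genRow k J K N hb i₀ '' S) = ⊤ := by
  have hli : LinearIndependent K fun r : S => genRow k J K N hb i₀ r :=
    linearIndepOn_genRow hb hS i₀
  rw [Set.image_eq_range]
  exact hli.span_eq_top_of_card_eq_finrank' (by simp [hS])

variable [Algebra k K] [IsScalarTower k (MvPolynomial (Vars ι J n N) k) K]

theorem exists_derivation_genRow_genVec (hb : b ≤ n) (dx : ι → Fin n → Fin b → K)
    (dv : J → Fin N → K) :
    ∃ D : Derivation k K K,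
      (∀ i₀ r, D ∘ genRow k J K N hb i₀ r = dx i₀ r) ∧ ∀ j, D ∘ genVec k ι K n j = dv j := by
  have : Algebra.FormallyEtale (MvPolynomial (Vars ι J n N) k) K :=
    .of_isLocalization (nonZeroDivisors _)
  obtain ⟨D, hD⟩ := exists_derivation_algebraMap_X (k := k) (K := K)
    (Sum.elim (fun w : ι × Fin n × Fin n =>
      Function.extend (Fin.castLE hb) (dx w.1 w.2.1) 0 w.2.2) fun w : J × Fin N => dv w.1 w.2)
  refine ⟨D, fun i₀ r => funext fun q => ?_, fun j => funext fun p => hD _⟩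
  exact (hD _).trans ((Fin.castLE_injective hb).extend_apply (dx i₀ r) 0 q)

variable [Fintype J] [Fintype Λ]
variable {i : J → ι} {d : J → ℕ} {c : Λ → k} {X : Λ → ι → Matrix (Fin n) (Fin n) k}

theorem leadSum_genMatrix_ne_zero {A : Type*} [CommRing A] [Algebra k A] {S : ι → Finset (Fin n)}
    {g : ι → Matrix (Fin n) (Fin n) A}
    (hg : ∀ i₀, ∀ r ∈ S i₀, ∀ q : Fin n, b ≤ (q : ℕ) → g i₀ r q = 0)
    (hQ : leadSum m i d c X g ≠ 0) : leadSum m i d c X (genMatrix k J N b S) ≠ 0 := by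
  let f : MvPolynomial (Vars ι J n N) k →ₐ[k] A := aeval
    (Sum.elim (fun w : ι × Fin n × Fin n => g w.1 w.2.1 w.2.2) fun _ => 0)
  have hf : (fun i₀ => (genMatrix k J N b S i₀).map f) = g := by
    ext i₀ r q
    by_cases h : r ∈ S i₀ ∧ b ≤ (q : ℕ)
    · simp [genMatrix, h, hg i₀ r h.1 q h.2]
    · simp [genMatrix, h, f]
  intro h0
  rw [← hf, leadSum_map, h0, map_zero] at hQ
  exact hQ rfl

theorem leadSum_genMatrix_adapted_ne_zero [IsAlgClosed k] [NeZero n] [Finite ι]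
    (hd : ∀ j, d j ≤ n) (hN : ∑ j, d j = n * N) (hSL : LeadSumInvariant m i d c X) (hb : b ≤ n)
    {S : ι → Finset (Fin n)} (hS : leadSum m i d c X (genMatrix k J N b S) ≠ 0)
    {T : Submodule K (Fin b → K)}
    {C : ι → Matrix (Fin n) (Fin n) K} {P : ι → Finset (Fin n)}
    (hCP : ∀ i₀, IsAdapted (genRow k J K N hb i₀) (S i₀) T (C i₀) (P i₀)) :
    leadSum m i d c X (genMatrix k J N (Module.finrank K T) P) ≠ 0 := by
  let E := Function.ExtendByZero.linearMap K (Fin.castLE hb)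
  have hE : Function.Injective E := Function.extend_injective (Fin.castLE_injective hb) _
  obtain ⟨h, hh, hhT⟩ := exists_det_ne_zero_vecMul_eq_zero (T.map E)
  rw [← (Submodule.equivMapOfInjective E hE T).finrank_eq] at hhT
  let f : MvPolynomial (Vars ι J n N) k →ₐ[k] K := IsScalarTower.toAlgHom k _ _
  have hf : Function.Injective f := IsFractionRing.injective _ _
  refine leadSum_genMatrix_ne_zero (g := fun i₀ => C i₀ * ((genMatrix k J N b S i₀).map f * h))
    (fun i₀ r hr q hq => ?_) ?_
  · rw [← Matrix.mul_assoc, mul_apply_eq_vecMul,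
      show (C i₀ * (genMatrix k J N b S i₀).map f) r = E _ from
        mul_map_genMatrix_row hb fun r' hr' => (hCP i₀).apply_eq_zero r hr r' hr']
    exact hhT _ (Submodule.mem_map_of_mem ((hCP i₀).mem r hr)) q hq
  · rw [leadSum_lower_mul i d c X fun i₀ => (hCP i₀).isLowerUnitriangular.2,
      hSL.mul_right hd hN, leadSum_map]
    simp only [(hCP _).isLowerUnitriangular.1, Finset.prod_const_one, one_pow, one_mul]
    exact mul_ne_zero (pow_ne_zero _ hh) ((map_ne_zero_iff f hf).2 hS)

/-- Strong induction on `b`: a dependence whose left factors lie in a proper subspace `T` becomes,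
after row operations adapted to `T`, a dependence between generic vectors of length `dim T`. -/
theorem eq_zero_of_sum_vecMulVec_genVec_eq_zero [IsAlgClosed k] [NeZero n] [Finite ι] (hm : 0 < m)
    (hd : ∀ j, d j ≤ n) (hN : ∑ j, d j = n * N) (hSL : LeadSumInvariant m i d c X) (hb : b ≤ n)
    {S : ι → Finset (Fin n)} (hcard : ∀ i₀, (S i₀).card = b)
    (hS : leadSum m i d c X (genMatrix k J N b S) ≠ 0) {f : J → Fin b → K}
    (hf : ∀ j, f j ∈ Submodule.span K
      (genRow k J K N hb (i j) '' {r ∈ (S (i j) : Set (Fin n)) | (r : ℕ) < d j}))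
    (hfv : ∑ j, vecMulVec (f j) (genVec k ι K n (N := N) j) = 0) : f = 0 := by
  induction b using Nat.strong_induction_on generalizing S with
  | _ b ih =>
  have : Infinite K :=
    Infinite.of_injective _ (algebraMap k K).injective
  have hR (j : J) : {r ∈ (S (i j) : Set (Fin n)) | (r : ℕ) < d j} =
      (S (i j)).filter fun r : Fin n => (r : ℕ) < d j := (Finset.coe_filter _ _).symm
  simp only [hR] at hf
  refine eq_zero_of_sum_vecMulVec_eq_zero (k := k) (exists_derivation_genRow_genVec hb) ?_
    (fun T hT => ?_) hf hfv
  · rw [Fintype.card_fin, Fintype.card_fin]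
    refine sum_card_le_of_leadSum_ne_zero hm (hSL.mul_right hd hN) hb (fun i₀ r hr q hq => ?_) hS
    simp [genMatrix, hr, hq]
  · have hx (i₀ : ι) : LinearIndepOn K (genRow k J K N hb i₀) (S i₀) :=
      linearIndepOn_genRow hb (hcard i₀) i₀
    choose C P hCP using fun i₀ => exists_isAdapted (hx i₀) (span_genRow hb (hcard i₀) i₀) T
    have hT' : Module.finrank K T < b := by
      simpa using Submodule.finrank_lt hT
    have hTn := hT'.le.trans hb
    have hw (i₀ : ι) : LinearIndepOn K (genRow k J K N hTn i₀) (P i₀) :=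
      linearIndepOn_genRow hTn (hCP i₀).card_eq i₀
    choose A hA using fun i₀ => (hCP i₀).exists_linearMap (hw i₀)
    refine ⟨A, fun f hf hfv => ?_⟩
    simp only [← hR] at hf
    have hAf (j : J) := hA (i j) (d j) (f j) (hf j)
    have hS' := leadSum_genMatrix_adapted_ne_zero hd hN hSL hb hS hCP
    have hAf0 : (fun j => A (i j) (f j)) = 0 :=
      ih _ hT' hTn (fun i₀ => (hCP i₀).card_eq) hS' (fun j => (hAf j).1) hfv
    exact funext fun j => (hAf j).2 (congrFun hAf0 j)

end GenericMatrices

section RowDeterminant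

open MvPolynomial

/-- The index set of the rows `g_{i j}(r) ⊗ v_j`, `r < d j`. -/
abbrev Rows {J : Type*} (n : ℕ) (d : J → ℕ) := Σ j : J, {r : Fin n // (r : ℕ) < d j}

variable {n N : ℕ} {ι J : Type*} {A B : Type*} [CommRing A] [CommRing B]

theorem card_rows [Fintype J] {d : J → ℕ} (hd : ∀ j, d j ≤ n) (hN : ∑ j, d j = n * N) :
    Fintype.card (Rows n d) = Fintype.card (Fin n × Fin N) := by
  rw [Fintype.card_sigma, Finset.sum_congr rfl fun j _ => card_subtype_val_lt (hd j), hN]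
  simp

/-- The matrix whose rows are the rank one matrices `g_{i j}(r) ⊗ v_j`, `r < d j`. -/
def rowMat (i : J → ι) (d : J → ℕ) (g : ι → Matrix (Fin n) (Fin n) A) (v : J → Fin N → A) :
    Matrix (Rows n d) (Fin n × Fin N) A :=
  of fun w w' => g (i w.1) w.2 w'.1 * v w.1 w'.2

theorem rowMat_mul_right (i : J → ι) {d : J → ℕ} (g : ι → Matrix (Fin n) (Fin n) A)
    (v : J → Fin N → A) (h : Matrix (Fin n) (Fin n) A) :
    rowMat i d (fun i₀ => g i₀ * h) v =
      rowMat i d g v * kroneckerMap (· * ·) h (1 : Matrix (Fin N) (Fin N) A) := by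
  ext w w'
  simp only [rowMat, mul_apply, Fintype.sum_prod_type, of_apply, kroneckerMap_apply, one_apply,
    mul_ite, mul_one, mul_zero, Finset.sum_ite_eq', Finset.mem_univ, if_true, Finset.sum_mul,
    mul_right_comm]

variable [Fintype J] [DecidableEq J]

/-- The determinant of `rowMat`, whose rows and columns are matched by `e`. -/
def rowDet (i : J → ι) (d : J → ℕ) (e : Rows n d ≃ Fin n × Fin N)
    (g : ι → Matrix (Fin n) (Fin n) A) (v : J → Fin N → A) : A :=
  ((rowMat i d g v).submatrix id e).det

variable (i : J → ι) {d : J → ℕ} (e : Rows n d ≃ Fin n × Fin N)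

theorem rowDet_map (f : A →+* B) (g : ι → Matrix (Fin n) (Fin n) A) (v : J → Fin N → A) :
    rowDet i d e (fun i₀ => (g i₀).map f) (fun j => f ∘ v j) = f (rowDet i d e g v) := by
  rw [rowDet, rowDet, RingHom.map_det]
  congr 1
  ext w w'
  simp [rowMat]

theorem rowDet_mul_right (g : ι → Matrix (Fin n) (Fin n) A) (v : J → Fin N → A)
    (h : Matrix (Fin n) (Fin n) A) :
    rowDet i d e (fun i₀ => g i₀ * h) v = rowDet i d e g v * h.det ^ N := by
  rw [rowDet, rowMat_mul_right, ← submatrix_mul_equiv _ _ id e e, det_mul, ← rowDet,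
    det_submatrix_equiv_self, det_kronecker]
  simp

theorem rowDet_smul (hd : ∀ j, d j ≤ n) (a : ι → A) (g : ι → Matrix (Fin n) (Fin n) A)
    (v : J → Fin N → A) :
    rowDet i d e (fun i₀ => a i₀ • g i₀) v = (∏ j, a (i j) ^ d j) * rowDet i d e g v := by
  have hrow : (rowMat i d (fun i₀ => a i₀ • g i₀) v).submatrix id e =
      of fun w w' => a (i w.1) * (rowMat i d g v).submatrix id e w w' := by
    ext w w'
    simp [rowMat, mul_assoc]
  rw [rowDet, hrow, det_mul_column, ← rowDet, Fintype.prod_sigma]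
  simp [card_subtype_val_lt (hd _)]

variable {i e}

theorem rowDet_ne_zero {K : Type*} [Field K] {g : ι → Matrix (Fin n) (Fin n) K} {v : J → Fin N → K}
    (hg : ∀ i₀, LinearIndependent K (g i₀))
    (hgv : ∀ f : J → Fin n → K,
      (∀ j, f j ∈ Submodule.span K (g (i j) '' {r : Fin n | (r : ℕ) < d j})) →
        ∑ j, vecMulVec (f j) (v j) = 0 → f = 0) :
    rowDet i d e g v ≠ 0 := by
  intro h0
  obtain ⟨z, hz0, hz⟩ := exists_vecMul_eq_zero_iff.2 h0
  let f : J → Fin n → K := fun j => ∑ r, z ⟨j, r⟩ • g (i j) r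
  have hf : f = 0 := by
    refine hgv f (fun j => Submodule.sum_mem _ fun r _ => Submodule.smul_mem _ _ <|
      Submodule.subset_span ⟨r, r.2, rfl⟩) (Matrix.ext fun q p => ?_)
    have hqp := congrFun hz (e.symm (q, p))
    rw [vecMul, dotProduct, Fintype.sum_sigma] at hqp
    simpa [f, rowMat, vecMulVec_apply, Matrix.sum_apply, Finset.sum_mul, mul_assoc] using hqp
  refine hz0 (funext fun ⟨j, r⟩ => ?_)
  exact Fintype.linearIndependent_iff.1 ((hg (i j)).comp _ Subtype.val_injective)
    (fun r => z ⟨j, r⟩) (congrFun hf j) r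

theorem exists_rowDet_ne_zero {k : Type*} [Field k] [IsAlgClosed k] [NeZero n] [Finite ι]
    (hd : ∀ j, d j ≤ n) {G : ι → Matrix (Fin n) (Fin n) (MvPolynomial (Vars ι J n N) k)}
    {W : J → Fin N → MvPolynomial (Vars ι J n N) k}
    (hG : ∀ i₀, (G i₀).det ≠ 0) (hGW : rowDet i d e G W ≠ 0) :
    ∃ (g : ι → Matrix (Fin n) (Fin n) k) (v : J → Fin N → k), (∀ i₀, (g i₀).det = 1) ∧
      rowDet i d e g v ≠ 0 := by
  cases nonempty_fintype ι
  obtain ⟨pt, hpt⟩ : ∃ pt, eval pt (rowDet i d e G W * ∏ i₀, (G i₀).det) ≠ 0 := by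
    by_contra! h
    exact mul_ne_zero hGW (Finset.prod_ne_zero_iff.2 fun i₀ _ => hG i₀)
      (MvPolynomial.funext fun pt => by rw [h pt, map_zero])
  rw [map_mul, map_prod] at hpt
  have hdet (i₀ : ι) : ((G i₀).map (eval pt)).det ≠ 0 := by
    have h := Finset.prod_ne_zero_iff.1 (right_ne_zero_of_mul hpt) i₀ (Finset.mem_univ _)
    rwa [RingHom.map_det] at h
  choose a g hg hGg _ using fun i₀ => exists_smul_det_eq_one (hdet i₀)
  refine ⟨g, fun j => eval pt ∘ W j, hg, ?_⟩
  have h := left_ne_zero_of_mul hpt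
  rw [← rowDet_map, funext hGg, rowDet_smul i e hd] at h
  exact right_ne_zero_of_mul h

theorem exists_rowDet_ne_zero_of_leadSum {k : Type*} [Field k] [IsAlgClosed k] [NeZero n]
    [Finite ι] {m : ℕ} {Λ : Type*} [Fintype Λ] {c : Λ → k}
    {X : Λ → ι → Matrix (Fin n) (Fin n) k} (hm : 0 < m) (hd : ∀ j, d j ≤ n)
    (hN : ∑ j, d j = n * N) (hSL : LeadSumInvariant m i d c X)
    {g₀ : ι → Matrix (Fin n) (Fin n) k} (hg₀ : leadSum m i d c X g₀ ≠ 0) :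
    ∃ (g : ι → Matrix (Fin n) (Fin n) k) (v : J → Fin N → k), (∀ i₀, (g i₀).det = 1) ∧
      rowDet i d e g v ≠ 0 := by
  let K := FractionRing (MvPolynomial (Vars ι J n N) k)
  let S : ι → Finset (Fin n) := fun _ => Finset.univ
  let G := genMatrix k J N n S
  let W (j : J) (p : Fin N) : MvPolynomial (Vars ι J n N) k := MvPolynomial.X (Sum.inr (j, p))
  have hGrow (i₀ : ι) : (G i₀).map (algebraMap _ K) = genRow k J K N le_rfl i₀ := by
    ext r q
    simp [G, S, genMatrix, genRow, q.2.not_ge]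
  have hli (i₀ : ι) : LinearIndependent K ((G i₀).map (algebraMap _ K)) := by
    have h : LinearIndepOn K (genRow k J K N le_rfl i₀) (S i₀ : Set (Fin n)) :=
      linearIndepOn_genRow le_rfl (Finset.card_fin n) i₀
    rwa [Finset.coe_univ, linearIndepOn_univ_iff, ← hGrow] at h
  have hS : leadSum m i d c X G ≠ 0 :=
    leadSum_genMatrix_ne_zero (fun i₀ r _ q hq => absurd hq q.2.not_ge) hg₀
  refine exists_rowDet_ne_zero hd (G := G) (W := W) (fun i₀ h0 => ?_) fun h0 => ?_
  · refine (Matrix.linearIndependent_rows_iff_isUnit.1 (hli i₀)).map detMonoidHom |>.ne_zero ?_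
    exact (RingHom.map_det _ _).symm.trans (by rw [h0, map_zero])
  · refine rowDet_ne_zero (i := i) (e := e) (v := genVec k ι K n) hli (fun f hf hfv => ?_)
      ((rowDet_map i e (algebraMap _ K) G W).trans (by rw [h0, map_zero]))
    refine eq_zero_of_sum_vecMulVec_genVec_eq_zero hm hd hN hSL le_rfl
      (fun _ => Finset.card_fin n) hS (fun j => ?_) hfv
    simpa [S, ← hGrow] using hf j

end RowDeterminant

section CauchyBinet

variable {κ ν A : Type*} [Fintype κ] [DecidableEq κ] [Fintype ν] [CommRing A]

theorem det_mul_eq_sum (M : Matrix κ ν A) (B : Matrix ν κ A) :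
    (M * B).det = ∑ I : κ → ν, (∏ k, B (I k) k) * (M.submatrix id I).det := by
  classical
  have hrows : (M * B)ᵀ = fun k => ∑ l, B l k • Mᵀ l := by
    ext k q
    simp [mul_apply, mul_comm]
  have hexpand := detRowAlternating.toMultilinearMap.map_sum fun k l => B l k • Mᵀ l
  rw [← det_transpose, hrows]
  refine hexpand.trans (Finset.sum_congr rfl fun I _ => ?_)
  rw [MultilinearMap.map_smul_univ, ← det_transpose (M.submatrix id I)]
  rfl

/-- Cauchy-Binet, summed over all maps rather than over increasing ones. -/
theorem card_perm_mul_det_mul (M : Matrix κ ν A) (B : Matrix ν κ A) :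
    (Fintype.card (Equiv.Perm κ) : A) * (M * B).det =
      ∑ I : κ → ν, (M.submatrix id I).det * (B.submatrix I id).det := by
  have hperm (σ : Equiv.Perm κ) : (M * B).det = ∑ I : κ → ν, (M.submatrix id I).det *
      (((Equiv.Perm.sign σ : ℤ) : A) * ∏ k, B (I (σ k)) k) := by
    rw [det_mul_eq_sum, ← Equiv.sum_comp (σ.arrowCongr (Equiv.refl ν)).symm]
    refine Finset.sum_congr rfl fun I _ => ?_
    change (∏ k, B (I (σ k)) k) * ((M.submatrix id I).submatrix id σ).det = _
    rw [det_permute']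
    ring
  calc (Fintype.card (Equiv.Perm κ) : A) * (M * B).det
      = ∑ _ : Equiv.Perm κ, (M * B).det := by simp
    _ = ∑ σ : Equiv.Perm κ, ∑ I : κ → ν, (M.submatrix id I).det *
        (((Equiv.Perm.sign σ : ℤ) : A) * ∏ k, B (I (σ k)) k) :=
        Finset.sum_congr rfl fun σ _ => hperm σ
    _ = _ := by
        rw [Finset.sum_comm]
        refine Finset.sum_congr rfl fun I _ => ?_
        rw [← Finset.mul_sum, det_apply' (B.submatrix I id)]
        rfl

end CauchyBinet

section SigmaPerm

variable {J : Type*} [DecidableEq J] {κ : J → Type*} [∀ j, DecidableEq (κ j)]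

theorem sigmaCongrRight_mulSingle_swap (j : J) (a b : κ j) :
    Equiv.Perm.sigmaCongrRight (Pi.mulSingle j (Equiv.swap a b)) =
      Equiv.swap (⟨j, a⟩ : Σ j, κ j) ⟨j, b⟩ := by
  ext1 ⟨j', r⟩
  change (⟨j', (Pi.mulSingle j (Equiv.swap a b) : ∀ j, Equiv.Perm (κ j)) j' r⟩ : Σ j, κ j) = _
  by_cases hj : j' = j
  · subst hj
    rw [Pi.mulSingle_eq_same]
    simp only [Equiv.swap_apply_def]
    split_ifs <;> simp_all
  · have hne (s : κ j) : (⟨j', r⟩ : Σ j, κ j) ≠ ⟨j, s⟩ := fun h => hj (congrArg Sigma.fst h)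
    rw [Pi.mulSingle_eq_of_ne hj, Equiv.swap_apply_of_ne_of_ne (hne a) (hne b),
      Equiv.Perm.one_apply]

variable [Fintype J] [∀ j, Fintype (κ j)]

theorem sign_sigmaCongrRight (τ : ∀ j, Equiv.Perm (κ j)) :
    Equiv.Perm.sign (Equiv.Perm.sigmaCongrRight τ) = ∏ j, Equiv.Perm.sign (τ j) := by
  let F : (∀ j, Equiv.Perm (κ j)) →* ℤˣ :=
    Equiv.Perm.sign.comp (Equiv.Perm.sigmaCongrRightHom κ)
  let G : (∀ j, Equiv.Perm (κ j)) →* ℤˣ :=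
    { toFun τ := ∏ j, Equiv.Perm.sign (τ j)
      map_one' := by simp
      map_mul' τ τ' := by simp [Finset.prod_mul_distrib] }
  suffices h : F = G from DFunLike.congr_fun h τ
  refine MonoidHom.pi_ext fun j ρ => ?_
  induction ρ using Equiv.Perm.swap_induction_on with
  | one => rw [Pi.mulSingle_one, map_one, map_one]
  | swap_mul ρ a b hab ih =>
    rw [Pi.mulSingle_mul, map_mul, map_mul, ih]
    congr 1
    have hab' : (⟨j, a⟩ : Σ j, κ j) ≠ ⟨j, b⟩ := fun h => hab (eq_of_heq (Sigma.mk.inj h).2)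
    trans (-1 : ℤˣ)
    · change Equiv.Perm.sign (Equiv.Perm.sigmaCongrRight (Pi.mulSingle j (Equiv.swap a b))) = _
      rw [sigmaCongrRight_mulSingle_swap, Equiv.Perm.sign_swap hab']
    · change _ =
        ∏ j', Equiv.Perm.sign ((Pi.mulSingle j (Equiv.swap a b) : ∀ j, Equiv.Perm (κ j)) j')
      rw [Finset.prod_eq_single j (fun j' _ hj' => by simp [Pi.mulSingle_eq_of_ne hj']) (by simp),
        Pi.mulSingle_eq_same, Equiv.Perm.sign_swap hab]

end SigmaPerm

section Minors

variable {n N : ℕ} {ι J : Type*} [Fintype J] {A : Type*} [CommRing A]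

/-- The choices of `d j` columns for each `j`. -/
abbrev ColIdx {J : Type*} (n : ℕ) (d : J → ℕ) := ∀ j : J, {r : Fin n // (r : ℕ) < d j} → Fin n

/-- The product over `j` of the minor of `g_{i j}` on the first `d j` rows and the columns `I j`. -/
def minors (i : J → ι) (d : J → ℕ) (g : ι → Matrix (Fin n) (Fin n) A) (I : ColIdx n d) : A :=
  ∏ j, ((g (i j)).submatrix (Subtype.val : {r : Fin n // (r : ℕ) < d j} → Fin n) (I j)).det

/-- The number of permutations of `Rows n d` preserving the blocks, that is the number of times
each term is repeated when sums over column sets are replaced by sums over `ColIdx n d`. -/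
def permCount (n : ℕ) (d : J → ℕ) : ℕ :=
  ∏ j, Fintype.card (Equiv.Perm {r : Fin n // (r : ℕ) < d j})

theorem permCount_ne_zero (d : J → ℕ) : permCount n d ≠ 0 :=
  Finset.prod_ne_zero_iff.2 fun _ _ => Fintype.card_ne_zero

variable (i : J → ι) (d : J → ℕ)

theorem card_perm_mul_lead (d : ℕ) (g x : Matrix (Fin n) (Fin n) A) :
    (Fintype.card (Equiv.Perm {r : Fin n // (r : ℕ) < d}) : A) * lead d (g * x) =
      ∑ I : {r : Fin n // (r : ℕ) < d} → Fin n,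
        (g.submatrix Subtype.val I).det * (xᵀ.submatrix Subtype.val I).det := by
  have hsub : lead d (g * x) = (g.submatrix (Subtype.val : {r : Fin n // (r : ℕ) < d} → Fin n) id *
      x.submatrix id Subtype.val).det := rfl
  rw [hsub, card_perm_mul_det_mul]
  refine Finset.sum_congr rfl fun I _ => congrArg _ ?_
  rw [← det_transpose]
  rfl

variable [DecidableEq J]

theorem permCount_mul_prod_lead (g x : ι → Matrix (Fin n) (Fin n) A) :
    (permCount n d : A) * ∏ j, lead (d j) (g (i j) * x (i j)) =
      minors i d g ⬝ᵥ minors i d fun i₀ => (x i₀)ᵀ := by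
  rw [permCount, Nat.cast_prod, ← Finset.prod_mul_distrib]
  simp only [card_perm_mul_lead, Finset.prod_univ_sum, Fintype.piFinset_univ,
    Finset.prod_mul_distrib, minors, dotProduct]

theorem rowDet_eq_sum_perm (e : Rows n d ≃ Fin n × Fin N) (g : ι → Matrix (Fin n) (Fin n) A)
    (v : J → Fin N → A) (τ : ∀ j, Equiv.Perm {r : Fin n // (r : ℕ) < d j}) :
    rowDet i d e g v =
      ∑ π : Equiv.Perm (Rows n d), (((Equiv.Perm.sign π : ℤ) : A) * ∏ w, v w.1 (e (π w)).2) *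
        ∏ j, (((Equiv.Perm.sign (τ j) : ℤ) : A) *
          ∏ r : {r : Fin n // (r : ℕ) < d j}, g (i j) r (e (π ⟨j, τ j r⟩)).1) := by
  rw [rowDet, ← det_transpose, det_apply',
    ← Equiv.sum_comp (Equiv.mulRight (Equiv.Perm.sigmaCongrRight τ))]
  refine Finset.sum_congr rfl fun π _ => ?_
  have hv : ∏ w : Rows n d, v w.1 (e (π (Equiv.Perm.sigmaCongrRight τ w))).2 =
      ∏ w, v w.1 (e (π w)).2 :=
    Equiv.prod_comp (Equiv.Perm.sigmaCongrRight τ) fun w => v w.1 (e (π w)).2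
  have hg : ∏ w : Rows n d, g (i w.1) w.2 (e (π (Equiv.Perm.sigmaCongrRight τ w))).1 =
      ∏ j, ∏ r : {r : Fin n // (r : ℕ) < d j}, g (i j) r (e (π ⟨j, τ j r⟩)).1 :=
    Fintype.prod_sigma _
  simp only [Equiv.coe_mulRight, Equiv.Perm.sign_mul, sign_sigmaCongrRight, Equiv.Perm.mul_apply,
    transpose_apply, submatrix_apply, rowMat, of_apply, Finset.prod_mul_distrib, id, hv, hg]
  push_cast
  ring

/-- Laplace expansion along the blocks of rows. -/
theorem permCount_mul_rowDet (e : Rows n d ≃ Fin n × Fin N) (g : ι → Matrix (Fin n) (Fin n) A)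
    (v : J → Fin N → A) :
    (permCount n d : A) * rowDet i d e g v =
      ∑ π : Equiv.Perm (Rows n d), (((Equiv.Perm.sign π : ℤ) : A) * ∏ w, v w.1 (e (π w)).2) *
        minors i d g fun j r => (e (π ⟨j, r⟩)).1 := by
  have hminor (π : Equiv.Perm (Rows n d)) (j : J) :
      ((g (i j)).submatrix (Subtype.val : {r : Fin n // (r : ℕ) < d j} → Fin n)
        fun r => (e (π ⟨j, r⟩)).1).det = ∑ τ : Equiv.Perm {r : Fin n // (r : ℕ) < d j},
          ((Equiv.Perm.sign τ : ℤ) : A) *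
            ∏ r : {r : Fin n // (r : ℕ) < d j}, g (i j) r (e (π ⟨j, τ r⟩)).1 := by
    rw [← det_transpose, det_apply']
    rfl
  have hcard : (permCount n d : A) * rowDet i d e g v =
      ∑ _τ : (∀ j, Equiv.Perm {r : Fin n // (r : ℕ) < d j}), rowDet i d e g v := by
    simp [permCount]
  rw [hcard, Finset.sum_congr rfl fun τ _ => rowDet_eq_sum_perm i d e g v τ, Finset.sum_comm]
  refine Finset.sum_congr rfl fun π _ => ?_
  rw [← Finset.mul_sum]
  simp only [minors, hminor, Finset.prod_univ_sum, Fintype.piFinset_univ]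

theorem exists_permCount_mul_rowDet_eq_dotProduct (e : Rows n d ≃ Fin n × Fin N)
    (v : J → Fin N → A) :
    ∃ a : ColIdx n d → A, ∀ g : ι → Matrix (Fin n) (Fin n) A,
      (permCount n d : A) * rowDet i d e g v = a ⬝ᵥ minors i d g := by
  refine ⟨∑ π : Equiv.Perm (Rows n d), (((Equiv.Perm.sign π : ℤ) : A) *
    ∏ w, v w.1 (e (π w)).2) • Pi.single (fun j r => (e (π ⟨j, r⟩)).1) 1, fun g => ?_⟩
  rw [permCount_mul_rowDet, sum_dotProduct]
  simp

end Minors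

section LeadSumOfRowDet

theorem exists_mem_forall_dotProduct_eq {𝕜 T : Type*} [RCLike 𝕜] [Fintype T]
    {R : Submodule 𝕜 (T → 𝕜)} (hR : ∀ z ∈ R, star z ∈ R) (a : T → 𝕜) :
    ∃ y ∈ R, ∀ z ∈ R, a ⬝ᵥ z = y ⬝ᵥ z := by
  let L := WithLp.linearEquiv 2 𝕜 (T → 𝕜)
  let R' : Submodule 𝕜 (EuclideanSpace 𝕜 T) := R.comap L.toLinearMap
  let a' : EuclideanSpace 𝕜 T := WithLp.toLp 2 (star a)
  let y' : R' := R'.orthogonalProjectionOnto a'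
  refine ⟨star (L y'), hR _ y'.2, fun z hz => ?_⟩
  have horth : inner 𝕜 (a' - y') (WithLp.toLp 2 z) = 0 :=
    Submodule.inner_left_of_mem_orthogonal (K := R') (by exact hz)
      (Submodule.sub_starProjection_mem_orthogonal (K := R') a')
  rw [inner_sub_left, sub_eq_zero] at horth
  simp only [PiLp.inner_apply, RCLike.inner_apply] at horth
  simpa [a', L, mul_comm, dotProduct] using horth

variable {n N : ℕ} {ι J : Type*} [Fintype J] (i : J → ι) (d : J → ℕ)

theorem star_mem_span_minors {𝕜 : Type*} [RCLike 𝕜] {z : ColIdx n d → 𝕜}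
    (hz : z ∈ Submodule.span 𝕜 (minors i d '' {x | ∀ i₀, (x i₀).det = 1})) :
    star z ∈ Submodule.span 𝕜 (minors i d '' {x | ∀ i₀, (x i₀).det = 1}) := by
  induction hz using Submodule.span_induction with
  | mem z hz =>
    obtain ⟨x, hx, rfl⟩ := hz
    have hstar : star (minors i d x) = minors i d fun i₀ => (x i₀).map (starRingEnd 𝕜) := by
      funext I
      rw [Pi.star_apply, minors, minors, ← starRingEnd_apply, map_prod]
      exact Finset.prod_congr rfl fun j _ => RingHom.map_det _ _
    rw [hstar]
    refine Submodule.subset_span ⟨_, fun i₀ => ?_, rfl⟩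
    rw [← RingHom.mapMatrix_apply, ← RingHom.map_det, hx, map_one]
  | zero => simp
  | add z w _ _ hz hw => rw [star_add]; exact add_mem hz hw
  | smul a z _ hz => rw [star_smul]; exact Submodule.smul_mem _ _ hz

theorem exists_rowDet_eq_leadSum [DecidableEq J] {𝕜 : Type*} [RCLike 𝕜]
    (e : Rows n d ≃ Fin n × Fin N) (v : J → Fin N → 𝕜) :
    ∃ (L : ℕ) (c : Fin L → 𝕜) (X : Fin L → ι → Matrix (Fin n) (Fin n) 𝕜),
      (∀ l i₀, (X l i₀).det = 1) ∧
      ∀ g : ι → Matrix (Fin n) (Fin n) 𝕜, (∀ i₀, (g i₀).det = 1) →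
        rowDet i d e g v = leadSum 1 i d c X g := by
  obtain ⟨a, ha⟩ := exists_permCount_mul_rowDet_eq_dotProduct i d e v
  obtain ⟨y, hy, hay⟩ := exists_mem_forall_dotProduct_eq
    (fun z => star_mem_span_minors (n := n) i d) a
  obtain ⟨L, c, u, rfl⟩ := Submodule.mem_span_set'.1 hy
  choose x hx hxu using fun l => (u l).2
  refine ⟨L, c, fun l i₀ => (x l i₀)ᵀ, fun l i₀ => (det_transpose _).trans (hx l i₀),
    fun g hg => mul_left_cancel₀ (Nat.cast_ne_zero.2 (permCount_ne_zero (n := n) d)) ?_⟩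
  rw [ha, hay _ (Submodule.subset_span ⟨g, hg, rfl⟩), sum_dotProduct, leadSum, Finset.mul_sum]
  refine Finset.sum_congr rfl fun l _ => ?_
  have hl := permCount_mul_prod_lead i d g fun i₀ => (x l i₀)ᵀ
  simp only [transpose_transpose] at hl
  simp only [pow_one, Algebra.algebraMap_self, RingHom.coe_id, id, map_id]
  rw [smul_dotProduct, ← hxu, dotProduct_comm, ← hl, smul_eq_mul, mul_left_comm]

end LeadSumOfRowDet

section ScalingFixedVector

variable {K X G : Type*} [Field K] [AddCommGroup X] [Module K X]

theorem hasEigenvector_pow_of_scaling {q : ℕ} {F S : Module.End K X}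
    (hS : Function.Injective S) (hFS : F * S = S * F ^ q) {μ : K} {y : X}
    (hy : F.HasEigenvector μ y) (k : ℕ) : F.HasEigenvector (μ ^ q ^ k) ((S ^ k) y) := by
  induction k with
  | zero => simpa using hy
  | succ k ih =>
    have hF : F (S ((S ^ k) y)) = S ((F ^ q) ((S ^ k) y)) := LinearMap.congr_fun hFS _
    rw [pow_succ' S, Module.End.mul_apply]
    refine ⟨Module.End.mem_eigenspace_iff.2 ?_, (map_ne_zero_iff S hS).2 ih.2⟩
    rw [hF, ih.pow_apply, map_smul, ← pow_mul, ← pow_succ]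

/-- By `hasEigenvector_pow_of_scaling` all `μ ^ q ^ k` are eigenvalues, so two of them coincide. -/
theorem eigenvalue_pow_factorial_eq_one [FiniteDimensional K X] {q : ℕ} (hq : 2 ≤ q)
    {F S : Module.End K X} (hS : Function.Injective S) (hF : Function.Injective F)
    (hFS : F * S = S * F ^ q) {μ : K} {y : X} (hy : F.HasEigenvector μ y) :
    μ ^ (q ^ Module.finrank K X).factorial = 1 := by
  have hμ : μ ≠ 0 := by
    rintro rfl
    exact (map_ne_zero_iff F hF).2 hy.2 (by rw [hy.apply_eq_smul, zero_smul])
  obtain ⟨a, b, hab, hb, h⟩ :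
      ∃ a b : ℕ, a < b ∧ b ≤ Module.finrank K X ∧ μ ^ q ^ a = μ ^ q ^ b := by
    by_contra! hne
    have hinj : Function.Injective fun k : Fin (Module.finrank K X + 1) => μ ^ q ^ (k : ℕ) :=
      Function.Injective.of_lt_imp_ne fun a b hab => hne a b hab (Nat.lt_succ_iff.1 b.2)
    have hcard := (Module.End.eigenvectors_linearIndependent' F _ hinj _ fun k =>
      hasEigenvector_pow_of_scaling hS hFS hy k).fintype_card_le_finrank
    simp at hcard
  have hlt : q ^ a < q ^ b := Nat.pow_lt_pow_right hq hab
  have hone : μ ^ (q ^ b - q ^ a) = 1 := by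
    rw [pow_sub₀ μ hμ hlt.le, ← h, mul_inv_cancel₀ (pow_ne_zero _ hμ)]
  have hdvd : (q ^ b - q ^ a) ∣ (q ^ Module.finrank K X).factorial :=
    Nat.dvd_factorial (by lia) ((Nat.sub_le _ _).trans (Nat.pow_le_pow_right (by lia) hb))
  obtain ⟨r, hr⟩ := hdvd
  rw [hr, pow_mul, hone, one_pow]

variable [FiniteDimensional K X] [CommGroup G]

theorem inf_eigenspace_one_ne_bot_of_scaling [IsAlgClosed K] {q : ℕ} (hq : 2 ≤ q)
    (hG : ∀ m ≠ 0, Function.Surjective fun a : G => a ^ m) {E : Representation K G X}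
    {S : Module.End K X} (hS : Function.Injective S) (hES : ∀ a, E a * S = S * E a ^ q)
    {Y : Submodule K X} (hY : Y ≠ ⊥) (hEY : ∀ a, Y ∈ Module.End.invtSubmodule (E a)) (a : G) :
    Y ⊓ Module.End.eigenspace (E a) 1 ≠ ⊥ := by
  obtain ⟨b, rfl⟩ := hG (q ^ Module.finrank K X).factorial (Nat.factorial_ne_zero _) a
  have : Nontrivial Y := Submodule.nontrivial_iff_ne_bot.2 hY
  obtain ⟨μ, hμ⟩ := Module.End.exists_eigenvalue (LinearMap.restrict (E b) (hEY b))
  obtain ⟨y, hy⟩ := hμ.exists_hasEigenvector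
  have hyX : Module.End.HasEigenvector (E b) μ (y : X) :=
    ⟨Module.End.mem_eigenspace_iff.2 (congrArg Subtype.val hy.apply_eq_smul),
      fun h => hy.2 (Subtype.ext h)⟩
  have hroot := eigenvalue_pow_factorial_eq_one hq hS (E.apply_bijective b).1 (hES b) hyX
  refine (Submodule.ne_bot_iff _).2 ⟨y, ⟨y.2, Module.End.mem_eigenspace_iff.2 ?_⟩, hyX.2⟩
  rw [map_pow, hyX.pow_apply, hroot]

theorem exists_fixed_of_scaling [IsAlgClosed K] {q : ℕ} (hq : 2 ≤ q)
    (hG : ∀ m ≠ 0, Function.Surjective fun a : G => a ^ m) {E : Representation K G X}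
    {S : Module.End K X} (hS : Function.Injective S) (hES : ∀ a, E a * S = S * E a ^ q)
    {Y₀ : Submodule K X} (hY₀ : Y₀ ≠ ⊥) (hEY : ∀ a, Y₀ ∈ Module.End.invtSubmodule (E a))
    (hSY : Y₀ ∈ Module.End.invtSubmodule S) : ∃ y ∈ Y₀, y ≠ 0 ∧ ∀ a, E a y = y := by
  obtain ⟨Y, ⟨hY, hYle, hYE, hYS⟩, hmin⟩ := wellFounded_lt.has_min
    {Y : Submodule K X | Y ≠ ⊥ ∧ Y ≤ Y₀ ∧ (∀ a, Y ∈ Module.End.invtSubmodule (E a)) ∧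
      Y ∈ Module.End.invtSubmodule S}
    ⟨Y₀, hY₀, le_rfl, hEY, hSY⟩
  have hfixed (a : G) : Y ≤ Module.End.eigenspace (E a) 1 := by
    refine inf_eq_left.1 (eq_of_le_of_not_lt inf_le_left (hmin _
      ⟨inf_eigenspace_one_ne_bot_of_scaling hq hG hS hES hY hYE a, inf_le_left.trans hYle,
        fun b z hz => ⟨hYE b hz.1, ?_⟩, fun z hz => ⟨hYS hz.1, ?_⟩⟩))
    all_goals
      have hza : E a z = z := by simpa using hz.2
      refine Module.End.mem_eigenspace_iff.2 ?_
      rw [one_smul]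
    · rw [← Module.End.mul_apply, ← map_mul, mul_comm a b, map_mul, Module.End.mul_apply, hza]
    · have hpow : (E a ^ q) z = z := by
        rw [Module.End.pow_apply, Function.iterate_fixed hza]
      rw [← Module.End.mul_apply, hES, Module.End.mul_apply, hpow]
  obtain ⟨y, hy, hy0⟩ := Submodule.exists_mem_ne_zero_of_ne_bot hY
  exact ⟨y, hYle hy, hy0, fun a => by simpa using hfixed a hy⟩

end ScalingFixedVector

section FixedBy

variable {K X G : Type*} [CommRing K] [AddCommGroup X] [Module K X] [Group G]

/-- The subspace of vectors fixed by every element of a set `P` of group elements. -/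
def fixedBy (ρ : Representation K G X) (P : Set G) : Submodule K X where
  carrier := {x | ∀ g ∈ P, ρ g x = x}
  zero_mem' g _ := map_zero _
  add_mem' hx hy g hg := by rw [map_add, hx g hg, hy g hg]
  smul_mem' a x hx g hg := by rw [map_smul, hx g hg]

theorem fixedBy_mem_invtSubmodule (ρ : Representation K G X) {P : Set G} {h : G}
    (hP : ∀ g ∈ P, h⁻¹ * g * h ∈ P) : fixedBy ρ P ∈ Module.End.invtSubmodule (ρ h) := by
  intro x hx g hg
  rw [← Module.End.mul_apply, ← map_mul, show g * h = h * (h⁻¹ * g * h) by group, map_mul,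
    Module.End.mul_apply, hx _ (hP g hg)]

end FixedBy

section LowerUnipotent

variable {n : ℕ}

theorem mul_apply_self_of_lower {A : Type*} [CommRing A] {b c : Matrix (Fin n) (Fin n) A}
    (hb : ∀ r r', r < r' → b r r' = 0) (hc : ∀ r r', r < r' → c r r' = 0) (r : Fin n) :
    (b * c) r r = b r r * c r r := by
  rw [mul_apply]
  refine Finset.sum_eq_single r (fun q _ hq => ?_) (by simp)
  rcases hq.lt_or_gt with h | h
  · rw [hc q r h, mul_zero]
  · rw [hb r q h, zero_mul]

/-- The group of lower unitriangular matrices whose first `k` rows are those of the identity. -/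
def uniLower (n k : ℕ) : Set (SL n) :=
  {g | IsLowerUnitriangular g.val ∧ ∀ r : Fin n, (r : ℕ) < k → g.val r = (1 : SL n).val r}

theorem uniLower_self : uniLower n n = {1} :=
  Set.eq_singleton_iff_unique_mem.2 ⟨⟨⟨by simp, fun r q h => one_apply_ne h.ne⟩, fun _ _ => rfl⟩,
    fun _ hg => Subtype.ext (funext fun r => hg.2 r r.2)⟩

theorem inv_apply_eq_zero_of_lower {h : SL n} (hh : ∀ r r', r < r' → h.val r r' = 0)
    {r r' : Fin n} (hr : r < r') : (h⁻¹).val r r' = 0 := by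
  have := h.val.invertibleOfIsUnitDet (by simp)
  have hinv := blockTriangular_inv_of_blockTriangular (M := h.val) (b := OrderDual.toDual)
    fun r r' => hh r r'
  have hentry := hinv (i := r) (j := r') hr
  rwa [inv_def, h.det_coe, Ring.inverse_one, one_smul,
    ← Matrix.SpecialLinearGroup.coe_inv] at hentry

theorem conj_mem_uniLower {h : SL n} (hh : ∀ r r', r < r' → h.val r r' = 0) {k : ℕ} {g : SL n}
    (hg : g ∈ uniLower n k) : h⁻¹ * g * h ∈ uniLower n k := by
  have hinv {r r' : Fin n} (hr : r < r') : (h⁻¹).val r r' = 0 := inv_apply_eq_zero_of_lower hh hr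
  have hlower (r r' : Fin n) (hr : r < r') : ((h⁻¹).val * g.val) r r' = 0 :=
    BlockTriangular.mul (b := OrderDual.toDual) (fun _ _ => hinv) (fun r r' => hg.1.2 r r') hr
  refine ⟨⟨fun r => ?_, fun r r' hr => BlockTriangular.mul (b := OrderDual.toDual)
    (fun r r' => hlower r r') (fun r r' => hh r r') hr⟩, fun r hr => ?_⟩
  · have hone := mul_apply_self_of_lower (fun _ _ => hinv) hh r
    rw [← Matrix.SpecialLinearGroup.coe_mul, inv_mul_cancel, Matrix.SpecialLinearGroup.coe_one,
      one_apply_eq] at hone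
    rw [Matrix.SpecialLinearGroup.coe_mul, Matrix.SpecialLinearGroup.coe_mul,
      mul_apply_self_of_lower hlower hh, mul_apply_self_of_lower (fun _ _ => hinv) hg.1.2, hg.1.1,
      mul_one, ← hone]
  · have hrow : ((h⁻¹).val * g.val) r = ((h⁻¹).val * (1 : SL n).val) r := by
      funext j
      rw [mul_apply, mul_apply]
      refine Finset.sum_congr rfl fun q _ => ?_
      rcases lt_or_ge r q with hq | hq
      · rw [hinv hq, zero_mul, zero_mul]
      · rw [hg.2 q (lt_of_le_of_lt hq hr)]
    rw [← inv_mul_cancel h, Matrix.SpecialLinearGroup.coe_mul, Matrix.SpecialLinearGroup.coe_mul,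
      Matrix.SpecialLinearGroup.coe_mul, mul_apply_eq_vecMul, hrow,
      Matrix.SpecialLinearGroup.coe_one, mul_one, ← mul_apply_eq_vecMul]

/-- The matrix adding `c j` times the `j`-th coordinate, for all `j` before `k`, to the `k`-th row;
the coordinates of `c` from `k` on are ignored. -/
def rowMatrix (k : Fin n) (c : Fin n → ℂ) : Matrix (Fin n) (Fin n) ℂ :=
  1 + vecMulVec (Pi.single k 1) fun j => if j < k then c j else 0

theorem mul_rowMatrix_apply (k : Fin n) (c : Fin n → ℂ) (g : Matrix (Fin n) (Fin n) ℂ)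
    (r j : Fin n) : (g * rowMatrix k c) r j = g r j + if j < k then g r k * c j else 0 := by
  simp [rowMatrix, mul_add, mul_vecMulVec, vecMulVec_apply]

theorem rowMatrix_apply (k : Fin n) (c : Fin n → ℂ) (r j : Fin n) :
    rowMatrix k c r j =
      (1 : Matrix (Fin n) (Fin n) ℂ) r j + if r = k ∧ j < k then c j else 0 := by
  obtain rfl | hr := eq_or_ne r k
  · simp [rowMatrix, vecMulVec_apply]
  · simp [rowMatrix, vecMulVec_apply, hr]

theorem isLowerUnitriangular_rowMatrix (k : Fin n) (c : Fin n → ℂ) :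
    IsLowerUnitriangular (rowMatrix k c) := by
  refine ⟨fun r => ?_, fun r j hrj => ?_⟩ <;> rw [rowMatrix_apply, if_neg (by lia), add_zero]
  · exact one_apply_eq r
  · exact one_apply_ne hrj.ne

theorem rowMatrix_mul_rowMatrix (k : Fin n) (c c' : Fin n → ℂ) :
    rowMatrix k c * rowMatrix k c' = rowMatrix k (c + c') := by
  ext r j
  rw [mul_rowMatrix_apply, rowMatrix_apply, rowMatrix_apply, rowMatrix_apply,
    if_neg (show ¬(r = k ∧ k < k) by simp), one_apply (i := r) (j := k)]
  by_cases hr : r = k <;> by_cases hj : j < k <;> simp [hr, hj, add_assoc]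

/-- The row operations of `rowMatrix k`, as a homomorphism from the additive group of
parameters. -/
def rowHom (k : Fin n) : Multiplicative (Fin n → ℂ) →* SL n :=
  MonoidHom.mk' (fun c => ⟨rowMatrix k c.toAdd, by
      rw [det_of_isLowerTriangular _ (isLowerUnitriangular_rowMatrix k _).2]
      exact Finset.prod_eq_one fun r _ => (isLowerUnitriangular_rowMatrix k _).1 r⟩)
    fun c c' => Subtype.ext (rowMatrix_mul_rowMatrix k c.toAdd c'.toAdd).symm

theorem mul_rowHom_neg_mem_uniLower {k : Fin n} {g : SL n} (hg : g ∈ uniLower n k) :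
    g * rowHom k (.ofAdd (-g.val k)) ∈ uniLower n (k + 1) := by
  have hentry (r j : Fin n) : (g * rowHom k (.ofAdd (-g.val k))).val r j =
      g.val r j + if j < k then g.val r k * -g.val k j else 0 := mul_rowMatrix_apply ..
  have hlt {r : Fin n} (hr : r < k) : g.val r k = 0 := hg.1.2 r k hr
  refine ⟨⟨fun r => ?_, fun r j hrj => ?_⟩, fun r hr => funext fun j => ?_⟩ <;> rw [hentry]
  · rw [hg.1.1, add_eq_left, ite_eq_right_iff]
    exact fun h => by rw [hlt h, zero_mul]
  · rw [hg.1.2 r j hrj, zero_add, ite_eq_right_iff]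
    exact fun h => by rw [hlt (hrj.trans h), zero_mul]
  · rcases (Fin.le_def.2 (Nat.lt_succ_iff.1 hr)).lt_or_eq with h | rfl
    · rw [hlt h, zero_mul, ite_self, add_zero, hg.2 r h]
    · rw [hg.1.1, one_mul, Matrix.SpecialLinearGroup.coe_one, one_apply]
      rcases lt_trichotomy j r with h | rfl | h
      · rw [if_pos h, if_neg h.ne', add_neg_cancel]
      · rw [if_neg (lt_irrefl j), if_pos rfl, add_zero, hg.1.1]
      · rw [if_neg h.not_gt, if_neg h.ne, add_zero, hg.1.2 r j h]

/-- The diagonal of `rowTorus k`. -/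
noncomputable def torusWeight (k j : Fin n) : ℂ :=
  if j < k then 2 else if j = k then (2 ^ (k : ℕ))⁻¹ else 1

theorem prod_torusWeight (k : Fin n) : ∏ j, torusWeight k j = 1 := by
  have hlt : ∏ j ∈ Finset.Iio k, torusWeight k j = 2 ^ (k : ℕ) := by
    rw [Finset.prod_congr rfl fun j hj => show torusWeight k j = 2 from
      if_pos (Finset.mem_Iio.1 hj), Finset.prod_const, Fin.card_Iio]
  have hgt (j : Fin n) (hj : j ∉ Finset.Iic k) : torusWeight k j = 1 := by
    rw [Finset.mem_Iic, not_le] at hj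
    rw [torusWeight, if_neg hj.not_gt, if_neg hj.ne']
  rw [← Finset.prod_subset (Finset.subset_univ _) fun j _ => hgt j, ← Finset.Iio_insert,
    Finset.prod_insert Finset.notMem_Iio_self, hlt, torusWeight, if_neg (lt_irrefl k), if_pos rfl,
    inv_mul_cancel₀ (pow_ne_zero _ two_ne_zero)]

/-- The torus element conjugating each row operation of `rowHom k` to its `2 ^ (k + 1)`-th power. -/
noncomputable def rowTorus (k : Fin n) : SL n :=
  ⟨diagonal (torusWeight k), by rw [det_diagonal, prod_torusWeight]⟩

theorem rowHom_mul_rowTorus (k : Fin n) (c : Multiplicative (Fin n → ℂ)) :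
    rowHom k c * rowTorus k = rowTorus k * rowHom k c ^ 2 ^ ((k : ℕ) + 1) := by
  have hweight (j : Fin n) (hj : j < k) :
      torusWeight k j = torusWeight k k * (2 ^ ((k : ℕ) + 1) : ℕ) := by
    simp [torusWeight, hj, pow_succ]
  rw [← map_pow]
  refine Subtype.ext (Matrix.ext fun r j => ?_)
  change (rowMatrix k c.toAdd * diagonal (torusWeight k)) r j =
    (diagonal (torusWeight k) * rowMatrix k ((2 ^ ((k : ℕ) + 1) : ℕ) • c.toAdd)) r j
  rw [mul_diagonal, diagonal_mul, rowMatrix_apply, rowMatrix_apply]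
  by_cases h : r = k ∧ j < k
  · obtain ⟨rfl, hj⟩ := h
    simp [hweight j hj, hj, hj.ne']
    ring
  · rw [if_neg h, if_neg h, add_zero, one_apply]
    split_ifs with hrj <;> simp [hrj]

theorem surjective_pow_multiplicative {m : ℕ} (hm : m ≠ 0) :
    Function.Surjective fun c : Multiplicative (Fin n → ℂ) => c ^ m := fun c =>
  ⟨.ofAdd ((m : ℂ)⁻¹ • c.toAdd), by
    change Multiplicative.ofAdd (m • ((m : ℂ)⁻¹ • c.toAdd)) = c
    rw [← Nat.cast_smul_eq_nsmul ℂ, smul_inv_smul₀ (Nat.cast_ne_zero.2 hm)]; rfl⟩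

variable {X : Type*} [AddCommGroup X] [Module ℂ X] [FiniteDimensional ℂ X]
    (ρ : Representation ℂ (SL n) X)

theorem fixedBy_uniLower_ne_bot_of_succ {k : Fin n} (hk : fixedBy ρ (uniLower n (k + 1)) ≠ ⊥) :
    fixedBy ρ (uniLower n k) ≠ ⊥ := by
  obtain ⟨y, hy, hy0, hrow⟩ := exists_fixed_of_scaling (q := 2 ^ ((k : ℕ) + 1))
    (E := ρ.comp (rowHom k)) (S := ρ (rowTorus k)) (Nat.le_self_pow (Nat.succ_ne_zero _) 2)
    (fun _ => surjective_pow_multiplicative) (ρ.apply_bijective _).1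
    (fun c => by
      rw [MonoidHom.comp_apply, ← map_mul, ← map_pow, ← map_mul, rowHom_mul_rowTorus]) hk
    (fun c => fixedBy_mem_invtSubmodule ρ fun g hg =>
      conj_mem_uniLower (isLowerUnitriangular_rowMatrix k c.toAdd).2 hg)
    (fixedBy_mem_invtSubmodule ρ fun g hg =>
      conj_mem_uniLower (fun r r' h => diagonal_apply_ne _ h.ne) hg)
  refine (Submodule.ne_bot_iff _).2 ⟨y, fun g hg => ?_, hy0⟩
  have hg' := hy _ (mul_rowHom_neg_mem_uniLower hg)
  have hr := hrow (.ofAdd (-g.val k))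
  rw [MonoidHom.comp_apply] at hr
  rwa [map_mul, Module.End.mul_apply, hr] at hg'

theorem exists_fixed_of_isLowerUnitriangular [Nontrivial X] :
    ∃ x ≠ 0, ∀ g : SL n, IsLowerUnitriangular g.val → ρ g x = x := by
  have hfixed : fixedBy ρ (uniLower n 0) ≠ ⊥ := by
    refine Nat.decreasingInduction (motive := fun k _ => fixedBy ρ (uniLower n k) ≠ ⊥)
      (fun k hk => fixedBy_uniLower_ne_bot_of_succ ρ (k := ⟨k, hk⟩)) ?_ n.zero_le
    obtain ⟨x, hx⟩ := exists_ne (0 : X)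
    refine (Submodule.ne_bot_iff _).2 ⟨x, ?_, hx⟩
    rw [uniLower_self]
    rintro _ rfl
    rw [map_one, Module.End.one_apply]
  obtain ⟨x, hx, hx0⟩ := Submodule.exists_mem_ne_zero_of_ne_bot hfixed
  exact ⟨x, hx0, fun g hg => hx g ⟨hg, fun r hr => absurd hr (Nat.not_lt_zero _)⟩⟩

end LowerUnipotent

section Weights

variable {n : ℕ}

/-- The coefficient of the weight `a` on the fundamental weight `ϖ_(k+1)`. At the last index
`Order.succ k = k`, so that the coefficient vanishes, as it should for `SL n`. -/
def expo (a : Fin n → ℤ) (k : Fin n) : ℕ := (a k - a (Order.succ k)).toNat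

theorem expo_nsmul (m : ℕ) (a : Fin n → ℤ) (k : Fin n) : expo (m • a) k = m * expo a k := by
  rw [expo, expo, Pi.smul_apply, Pi.smul_apply, ← nsmul_sub, nsmul_eq_mul]
  rcases le_total 0 (a k - a (Order.succ k)) with h | h
  · rw [Int.toNat_mul m.cast_nonneg h, Int.toNat_natCast]
  · rw [Int.toNat_of_nonpos h,
      Int.toNat_of_nonpos (mul_nonpos_of_nonneg_of_nonpos m.cast_nonneg h), mul_zero]

theorem cast_expo {a : Fin n → ℤ} (ha : SLDominant a) (k : Fin n) :
    (expo a k : ℤ) = a k - a (Order.succ k) :=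
  Int.toNat_of_nonneg (sub_nonneg.2 (ha _ _ (Order.le_succ k)))

variable [NeZero n] {a : Fin n → ℤ}

theorem sum_Ici_expo (ha : SLDominant a) (r : Fin n) :
    ∑ k ∈ Finset.Ici r, (expo a k : ℤ) = a r - a ⊤ := by
  induction r using WellFoundedGT.induction with
  | _ r ih =>
    rw [← Finset.Ioi_insert, Finset.sum_insert Finset.notMem_Ioi_self, cast_expo ha]
    by_cases hr : IsMax r
    · rw [Finset.Ioi_eq_empty.2 hr, Order.succ_eq_iff_isMax.2 hr, hr.eq_top]
      simp
    · rw [← Finset.Ici_succ_eq_Ioi_of_not_isMax hr, ih _ (Order.lt_succ_of_not_isMax hr),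
        sub_add_sub_cancel]

theorem prod_prod_pow_expo {K : Type*} [Field K] (ha : SLDominant a) {b : Fin n → K}
    (hb : ∏ r, b r = 1) :
    ∏ k : Fin n, (∏ r : {r : Fin n // (r : ℕ) < (k : ℕ) + 1}, b r) ^ expo a k =
      ∏ r, b r ^ a r := by
  have hb0 (r : Fin n) : b r ≠ 0 := fun h =>
    zero_ne_one ((Finset.prod_eq_zero (Finset.mem_univ r) h).symm.trans hb)
  calc
    _ = ∏ k, ∏ r ∈ Finset.Iic k, b r ^ expo a k := by
      refine Finset.prod_congr rfl fun k _ => ?_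
      rw [← Finset.prod_subtype (Finset.Iic k) (fun r => by
        rw [Finset.mem_Iic, Fin.le_def, Nat.lt_succ_iff]) b, ← Finset.prod_pow]
    _ = ∏ r, ∏ k ∈ Finset.Ici r, b r ^ expo a k := Finset.prod_comm' (by simp)
    _ = ∏ r, b r ^ a r / b r ^ a ⊤ := by
      refine Finset.prod_congr rfl fun r _ => ?_
      rw [Finset.prod_pow_eq_pow_sum, ← zpow_natCast, Nat.cast_sum, sum_Ici_expo ha,
        zpow_sub₀ (hb0 r)]
    _ = ∏ r, b r ^ a r := by
      rw [Finset.prod_div_distrib, Finset.prod_zpow, hb, _root_.one_zpow, div_one]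

end Weights

section BigCell

variable {n : ℕ}

theorem exists_vecMul_eq_zero_of_lead_ne_zero {K : Type*} [Field K] {g : Matrix (Fin n) (Fin n) K}
    {k : Fin n} (hg : lead k g ≠ 0) :
    ∃ w : Fin n → K, w k = 1 ∧ (∀ j, k < j → w j = 0) ∧ ∀ j, j < k → (w ᵥ* g) j = 0 := by
  obtain ⟨c, hc⟩ := vecMul_surjective_iff_isUnit.2
    ((isUnit_iff_isUnit_det _).2 (isUnit_iff_ne_zero.2 hg)) fun r => -g k r
  let w' : Fin n → K := fun r => if h : (r : ℕ) < k then c ⟨r, h⟩ else 0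
  refine ⟨Pi.single k 1 + w', by simp [w'], fun j hj => by simp [w', hj.ne', hj.not_gt],
    fun j hj => ?_⟩
  have hcj : ∑ r : {r : Fin n // (r : ℕ) < k}, c r * g r j = -g k j := congrFun hc ⟨j, hj⟩
  have hw' : (w' ᵥ* g) j = -g k j := by
    rw [← hcj, vecMul, dotProduct,
      ← Fintype.sum_subtype_add_sum_subtype fun r : Fin n => (r : ℕ) < k]
    have hlt (r : {r : Fin n // (r : ℕ) < k}) : w' r = c r := dif_pos r.2
    have hge (r : {r : Fin n // ¬(r : ℕ) < k}) : w' r = 0 := dif_neg r.2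
    simp only [hlt, hge, zero_mul, Finset.sum_const_zero, add_zero]
  rw [add_vecMul, single_one_vecMul, Pi.add_apply, hw', row, add_neg_cancel]

theorem exists_isLowerUnitriangular_mul_isUpperTriangular {K : Type*} [Field K]
    {g : Matrix (Fin n) (Fin n) K} (hg : ∀ k : Fin n, lead k g ≠ 0) :
    ∃ u : Matrix (Fin n) (Fin n) K, IsLowerUnitriangular u ∧ (u * g).IsUpperTriangular := by
  choose u hone hupper hlower using fun k => exists_vecMul_eq_zero_of_lead_ne_zero (hg k)
  exact ⟨u, ⟨hone, hupper⟩, fun k j hj => hlower k j hj⟩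

theorem IsLowerUnitriangular.det_eq_one {A : Type*} [CommRing A] {u : Matrix (Fin n) (Fin n) A}
    (hu : IsLowerUnitriangular u) : u.det = 1 := by
  rw [det_of_isLowerTriangular _ fun r j => hu.2 r j]
  exact Finset.prod_eq_one fun r _ => hu.1 r

theorem exists_lower_mul_eq_diag_mul_upper {g : SL n} (hg : ∀ k : Fin n, lead k g.val ≠ 0) :
    ∃ U T B : SL n, IsLowerUnitriangular U.val ∧ SLIsDiag T ∧ SLIsUniUpper B ∧ U * g = T * B := by
  obtain ⟨u, hu, hb⟩ := exists_isLowerUnitriangular_mul_isUpperTriangular hg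
  have hdet : ∏ r, (u * g.val) r r = 1 := by
    rw [← det_of_isUpperTriangular hb, det_mul, hu.det_eq_one, one_mul, g.2]
  have hb0 (r : Fin n) : (u * g.val) r r ≠ 0 :=
    Finset.prod_ne_zero_iff.1 (hdet.trans_ne one_ne_zero) r (Finset.mem_univ r)
  let U : SL n := ⟨u, hu.det_eq_one⟩
  let T : SL n := ⟨diagonal fun r => (u * g.val) r r, by rw [det_diagonal, hdet]⟩
  have hTB : T * (T⁻¹ * (U * g)) = U * g := mul_inv_cancel_left _ _
  have hent (r j : Fin n) :
      (u * g.val) r r * (T⁻¹ * (U * g)).val r j = (u * g.val) r j := by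
    rw [← diagonal_mul]
    exact congrFun (congrFun (congrArg Subtype.val hTB) r) j
  refine ⟨U, T, T⁻¹ * (U * g), hu, fun _ _ => diagonal_apply_ne _,
    ⟨fun r => mul_left_cancel₀ (hb0 r) ?_, fun r j h => mul_left_cancel₀ (hb0 r) ?_⟩, hTB.symm⟩
  · rw [hent, mul_one]
  · rw [hent, hb h, mul_zero]

variable {A : Type*} [CommRing A]

theorem lead_of_isUpperTriangular (d : ℕ) {b : Matrix (Fin n) (Fin n) A}
    (hb : b.IsUpperTriangular) : lead d b = ∏ r : {r : Fin n // (r : ℕ) < d}, b r r :=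
  det_of_isUpperTriangular fun _ _ h => hb h

/-- The function `∏ lead ⋅ ^ ⋅` on matrices of weight `a`, the matrix coefficient of the highest
weight vector and the lowest weight covector of `V(a)`. -/
def leadWeight (a : Fin n → ℤ) (g : Matrix (Fin n) (Fin n) A) : A :=
  ∏ k : Fin n, lead (k + 1) g ^ expo a k

theorem leadWeight_one (a : Fin n → ℤ) : leadWeight a (1 : Matrix (Fin n) (Fin n) A) = 1 := by
  simp [leadWeight, lead_of_isUpperTriangular _ blockTriangular_one]

theorem leadWeight_nsmul (m : ℕ) (a : Fin n → ℤ) (g : Matrix (Fin n) (Fin n) A) :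
    leadWeight (m • a) g = leadWeight a g ^ m := by
  simp only [leadWeight, expo_nsmul, ← Finset.prod_pow, ← pow_mul, mul_comm m]

theorem leadWeight_eq_prod_zpow [NeZero n] {a : Fin n → ℤ} (ha : SLDominant a) {g U T B : SL n}
    (hU : IsLowerUnitriangular U.val) (hT : SLIsDiag T) (hB : SLIsUniUpper B)
    (h : U * g = T * B) : leadWeight a g.val = ∏ r, T.val r r ^ a r := by
  have hTdet : ∏ r, T.val r r = 1 := by
    rw [← det_of_isUpperTriangular fun r j hj => hT r j hj.ne', T.2]
  rw [← prod_prod_pow_expo ha hTdet, leadWeight]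
  refine Finset.prod_congr rfl fun k _ => ?_
  have hlead := congrArg (fun x : SL n => lead ((k : ℕ) + 1) x.val) h
  simp only [Matrix.SpecialLinearGroup.coe_mul] at hlead
  rw [lead_lower_mul _ hU.2, lead_lower_mul _ fun r j hj => hT r j hj.ne,
    lead_of_isUpperTriangular _ fun r j hj => hB.2 r j hj] at hlead
  simpa [hU.1, hB.1] using congrArg (· ^ expo a k) hlead

theorem matrixCoeff_bigCell [NeZero n] {V : Type*} [AddCommGroup V] [Module ℂ V]
    {ρ : Representation ℂ (SL n) V} {a : Fin n → ℤ} (ha : SLDominant a) {v : V}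
    (hv : IsHWVector ρ a v) {ξ : Module.Dual ℂ V}
    (hξ : ∀ g : SL n, IsLowerUnitriangular g.val → ξ ∘ₗ ρ g = ξ) {g : SL n}
    (hg : ∀ k : Fin n, lead k g.val ≠ 0) : ξ (ρ g v) = ξ v * leadWeight a g.val := by
  obtain ⟨U, T, B, hU, hT, hB, h⟩ := exists_lower_mul_eq_diag_mul_upper hg
  calc
    ξ (ρ g v) = ξ (ρ (U * g) v) := by
      rw [map_mul, Module.End.mul_apply]
      exact (LinearMap.congr_fun (hξ U hU) (ρ g v)).symm
    _ = ξ v * leadWeight a g.val := by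
      rw [h, map_mul, Module.End.mul_apply, hv.2.1 B hB, hv.2.2 T hT, map_smul, smul_eq_mul,
        leadWeight_eq_prod_zpow ha hU hT hB h, mul_comm]

end BigCell

section MatrixCoeff

theorem exists_finset_separating {K Y : Type*} [Field K] (F : Submodule K (Y → K))
    [FiniteDimensional K F] : ∃ P : Finset Y, ∀ φ ∈ F, (∀ y ∈ P, φ y = 0) → φ = 0 := by
  obtain ⟨P, hP⟩ := Finset.exists_inf_le fun y : Y => (LinearMap.proj y ∘ₗ F.subtype).ker
  refine ⟨P, fun φ hφ h0 => funext fun y => ?_⟩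
  exact hP y (Submodule.mem_finsetInf.2 h0 : (⟨φ, hφ⟩ : F) ∈ P.inf _)

variable {n : ℕ}

theorem lead_one {A : Type*} [CommRing A] (d : ℕ) : lead d (1 : Matrix (Fin n) (Fin n) A) = 1 := by
  simp [lead_of_isUpperTriangular _ blockTriangular_one]

theorem exists_mul_mem_bigCell [NeZero n] (P : Finset (SL n)) :
    ∃ x : SL n, ∀ y ∈ P, ∀ k : Fin n, lead k (x * y).val ≠ 0 := by
  let G := mvPolynomialX (Fin n) (Fin n) ℂ
  let p (y : SL n) (k : ℕ) := lead k (G * y.val.map MvPolynomial.C)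
  have heval (M : Matrix (Fin n) (Fin n) ℂ) (y : SL n) (k : ℕ) :
      MvPolynomial.eval (fun w => M w.1 w.2) (p y k) = lead k (M * y.val) := by
    have hG : G.map (MvPolynomial.eval fun w => M w.1 w.2) = M := mvPolynomialX_mapMatrix_eval M
    rw [← lead_map, Matrix.map_mul, hG, Matrix.map_map]
    simp [Function.comp_def]
  have hp (y : SL n) (k : ℕ) : p y k ≠ 0 := fun h => by
    have hinv := heval (y⁻¹).val y k
    rw [h, map_zero, ← Matrix.SpecialLinearGroup.coe_mul, inv_mul_cancel,
      Matrix.SpecialLinearGroup.coe_one, lead_one] at hinv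
    exact zero_ne_one hinv
  have hprod : G.det * ∏ y ∈ P, ∏ k : Fin n, p y k ≠ 0 :=
    mul_ne_zero (det_mvPolynomialX_ne_zero _ _) (Finset.prod_ne_zero_iff.2 fun y _ =>
      Finset.prod_ne_zero_iff.2 fun k _ => hp y k)
  obtain ⟨pt, hpt⟩ : ∃ pt, MvPolynomial.eval pt (G.det * ∏ y ∈ P, ∏ k : Fin n, p y k) ≠ 0 := by
    by_contra! h
    exact hprod (MvPolynomial.funext fun pt => by rw [h pt, map_zero])
  let M : Matrix (Fin n) (Fin n) ℂ := of fun r q => pt (r, q)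
  have hdet : MvPolynomial.eval pt G.det = M.det := by
    rw [RingHom.map_det]
    exact congrArg det (mvPolynomialX_mapMatrix_eval M)
  rw [map_mul, hdet, map_prod] at hpt
  obtain ⟨a, x, hx, hMx, -⟩ := exists_smul_det_eq_one (left_ne_zero_of_mul hpt)
  refine ⟨⟨x, hx⟩, fun y hy k hk => ?_⟩
  have hy' := Finset.prod_ne_zero_iff.1 (right_ne_zero_of_mul hpt) y hy
  rw [map_prod] at hy'
  refine Finset.prod_ne_zero_iff.1 hy' k (Finset.mem_univ k) ((heval M y k).trans ?_)
  rw [hMx, Matrix.smul_mul, lead_smul k.2.le]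
  exact mul_eq_zero_of_right _ hk

/-- The fundamental weights, with multiplicity, whose sum is the weight `a`; the one indexed by
`⟨k, _⟩` corresponds to the leading minor of size `k + 1`. -/
abbrev WeightIdx (a : Fin n → ℤ) := Σ k : Fin n, Fin (expo a k)

theorem prod_lead_eq_leadWeight {A : Type*} [CommRing A] (a : Fin n → ℤ)
    (g : Matrix (Fin n) (Fin n) A) :
    ∏ j : WeightIdx a, lead (j.1 + 1) g = leadWeight a g := by
  simp [Fintype.prod_sigma, leadWeight]

variable {V : Type*} [AddCommGroup V] [Module ℂ V] {ρ : Representation ℂ (SL n) V}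

theorem span_orbit_eq_top (hρ : RepIsIrreducible ρ) {v : V} (hv : v ≠ 0) :
    Submodule.span ℂ (Set.range fun g => ρ g v) = ⊤ := by
  refine (hρ.2 _ fun g x hx => ?_).resolve_left fun h => hv ?_
  · refine (Submodule.span_le (p := (Submodule.span ℂ _).comap (ρ g))).2 ?_ hx
    rintro _ ⟨h, rfl⟩
    exact Submodule.subset_span ⟨g * h, by simp⟩
  · rw [← Submodule.mem_bot ℂ, ← h]
    exact Submodule.subset_span ⟨1, by simp⟩

theorem exists_lowest_weight_covector [FiniteDimensional ℂ V] [Nontrivial V] :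
    ∃ ξ : Module.Dual ℂ V, ξ ≠ 0 ∧ ∀ g : SL n, IsLowerUnitriangular g.val → ξ ∘ₗ ρ g = ξ := by
  obtain ⟨ξ, hξ0, hξ⟩ := exists_fixed_of_isLowerUnitriangular ρ.dual
  refine ⟨ξ, hξ0, fun g hg => ?_⟩
  conv_lhs => rw [← hξ g hg]
  rw [Representation.dual_apply, Module.Dual.transpose_apply, LinearMap.comp_assoc,
    ← Module.End.mul_eq_comp, ← map_mul, inv_mul_cancel, map_one, Module.End.one_eq_id,
    LinearMap.comp_id]

/-- The functions on `SL n` spanned by the matrix coefficients of `v` and the products of minors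
occurring in the translates of `leadWeight a`. -/
def coeffSpace (ρ : Representation ℂ (SL n) V) (v : V) (a : Fin n → ℤ) :
    Submodule ℂ (SL n → ℂ) :=
  LinearMap.range (LinearMap.pi fun y => LinearMap.applyₗ (ρ y v) :
      Module.Dual ℂ V →ₗ[ℂ] SL n → ℂ) ⊔
    Submodule.span ℂ (Set.range fun (I : ColIdx n fun j : WeightIdx a => (j.1 : ℕ) + 1)
      (y : SL n) => minors (fun _ => ()) _ (fun _ => y.valᵀ) I)

theorem sub_leadWeight_mem_coeffSpace (v : V) (a : Fin n → ℤ) (ξ : Module.Dual ℂ V) (b : ℂ)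
    (x : SL n) :
    (fun y => ξ (ρ (x * y) v) - b * leadWeight a (x * y).val) ∈ coeffSpace ρ v a := by
  refine Submodule.sub_mem _ (Submodule.mem_sup_left ⟨ξ ∘ₗ ρ x, ?_⟩) (Submodule.mem_sup_right ?_)
  · funext y
    simp
  let d : WeightIdx a → ℕ := fun j => (j.1 : ℕ) + 1
  have hexpand : (fun y : SL n => b * leadWeight a (x * y).val) = ∑ I : ColIdx n d,
      (b * (permCount n d : ℂ)⁻¹ * minors (fun _ => ()) d (fun _ => x.val) I) •
        fun y : SL n => minors (fun _ => ()) d (fun _ => y.valᵀ) I := by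
    funext y
    have hy := permCount_mul_prod_lead (fun _ => ()) d (fun _ => x.val) fun _ => y.val
    rw [prod_lead_eq_leadWeight, dotProduct] at hy
    simp only [Finset.sum_apply, Pi.smul_apply, smul_eq_mul, mul_assoc, ← Finset.mul_sum]
    rw [← hy, inv_mul_cancel_left₀ (Nat.cast_ne_zero.2 (permCount_ne_zero d))]
    rfl
  rw [hexpand]
  exact Submodule.sum_mem _ fun I _ => Submodule.smul_mem _ _ (Submodule.subset_span ⟨I, rfl⟩)

theorem matrixCoeff_eq_mul_leadWeight [NeZero n] [FiniteDimensional ℂ V] {a : Fin n → ℤ}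
    (ha : SLDominant a) {v : V} (hv : IsHWVector ρ a v) {ξ : Module.Dual ℂ V}
    (hξ : ∀ g : SL n, IsLowerUnitriangular g.val → ξ ∘ₗ ρ g = ξ) (g : SL n) :
    ξ (ρ g v) = ξ v * leadWeight a g.val := by
  have : FiniteDimensional ℂ (coeffSpace ρ v a) :=
    have := FiniteDimensional.span_of_finite ℂ (Set.finite_range
      fun (I : ColIdx n fun j : WeightIdx a => (j.1 : ℕ) + 1) (y : SL n) =>
        minors (fun _ => ()) _ (fun _ => y.valᵀ) I)
    Submodule.finiteDimensional_sup _ _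
  obtain ⟨P, hP⟩ := exists_finset_separating (coeffSpace ρ v a)
  obtain ⟨x, hx⟩ := exists_mul_mem_bigCell P
  have hzero := hP _ (sub_leadWeight_mem_coeffSpace v a ξ (ξ v) x) fun y hy =>
    sub_eq_zero.2 (matrixCoeff_bigCell ha hv hξ (hx y hy))
  simpa only [mul_inv_cancel_left] using sub_eq_zero.1 (congrFun hzero (x⁻¹ * g))

theorem exists_matrixCoeff_eq_leadWeight [NeZero n] [FiniteDimensional ℂ V]
    (hρ : RepIsIrreducible ρ) {a : Fin n → ℤ} (ha : SLDominant a) {v : V}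
    (hv : IsHWVector ρ a v) :
    ∃ ξ : Module.Dual ℂ V, ∀ g : SL n, ξ (ρ g v) = leadWeight a g.val := by
  have : Nontrivial V := ⟨v, 0, hv.1⟩
  obtain ⟨ξ, hξ0, hξ⟩ := exists_lowest_weight_covector (ρ := ρ)
  have hcoeff := matrixCoeff_eq_mul_leadWeight ha hv hξ
  have hξv : ξ v ≠ 0 := fun h => hξ0 <| LinearMap.ext_on (span_orbit_eq_top hρ hv.1) <| by
    rintro _ ⟨g, rfl⟩
    simp [hcoeff, h]
  refine ⟨(ξ v)⁻¹ • ξ, fun g => ?_⟩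
  rw [LinearMap.smul_apply, hcoeff, smul_eq_mul, inv_mul_cancel_left₀ hξv]

end MatrixCoeff

section TensorCoeff

open PiTensorProduct

variable {n s : ℕ}

theorem span_dual_orbit_eq_top {V : Type*} [AddCommGroup V] [Module ℂ V] [FiniteDimensional ℂ V]
    {ρ : Representation ℂ (SL n) V} (hρ : RepIsIrreducible ρ) {ξ : Module.Dual ℂ V} (hξ : ξ ≠ 0) :
    Submodule.span ℂ (Set.range fun g => ξ ∘ₗ ρ g) = ⊤ := by
  refine Submodule.span_eq_top_of_ne_zero fun z hz => ?_
  by_contra! h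
  refine hξ (LinearMap.ext_on (span_orbit_eq_top hρ hz) ?_)
  rintro _ ⟨g, rfl⟩
  exact h _ ⟨g, rfl⟩

variable {V : Fin s → Type*} [∀ i, AddCommGroup (V i)] [∀ i, Module ℂ (V i)]
  {ρ : ∀ i, Representation ℂ (SL n) (V i)}

theorem exists_eq_sum_tprod_orbit (hρ : ∀ i, RepIsIrreducible (ρ i)) {v : ∀ i, V i}
    (hv : ∀ i, v i ≠ 0) (t : ⨂[ℂ] i, V i) :
    ∃ (L : ℕ) (c : Fin L → ℂ) (X : Fin L → Fin s → SL n),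
      t = ∑ l, c l • tprod ℂ fun i => ρ i (X l i) (v i) := by
  have hspan := submodule_span_eq_top (g := fun i (g : SL n) => ρ i g (v i)) fun i =>
    span_orbit_eq_top (hρ i) (hv i)
  obtain ⟨L, c, u, rfl⟩ := Submodule.mem_span_set'.1 (hspan ▸ Submodule.mem_top (x := t))
  choose X hX using fun l => (u l).2
  exact ⟨L, c, X, by simp only [← hX]⟩

/-- The functional `t ↦ (⨂ ξ i) ((⨂ ρ i (g i)) t)`; as a function of `g` it is the matrix
coefficient of `t` against the pure covector `⨂ ξ i`. -/
noncomputable def tensorCoeff (ρ : ∀ i, Representation ℂ (SL n) (V i))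
    (ξ : ∀ i, Module.Dual ℂ (V i)) (g : Fin s → SL n) : Module.Dual ℂ (⨂[ℂ] i, V i) :=
  dualDistrib (tprod ℂ fun i => ξ i ∘ₗ ρ i (g i))

theorem tensorCoeff_tprod (ξ : ∀ i, Module.Dual ℂ (V i)) (g : Fin s → SL n) (v : ∀ i, V i) :
    tensorCoeff ρ ξ g (tprod ℂ v) = ∏ i, ξ i (ρ i (g i) (v i)) :=
  dualDistrib_apply _ _

theorem tensorCoeff_piTensorRep (ξ : ∀ i, Module.Dual ℂ (V i)) (g : Fin s → SL n) (h : SL n)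
    (t : ⨂[ℂ] i, V i) :
    tensorCoeff ρ ξ g (piTensorRep ρ h t) = tensorCoeff ρ ξ (fun i => g i * h) t := by
  have hcomp : tensorCoeff ρ ξ g ∘ₗ piTensorRep ρ h = tensorCoeff ρ ξ fun i => g i * h :=
    PiTensorProduct.ext <| MultilinearMap.ext fun v => by
      simp [piTensorRep, tensorCoeff_tprod]
  exact LinearMap.congr_fun hcomp t

theorem eq_zero_of_forall_tensorCoeff_eq_zero [∀ i, FiniteDimensional ℂ (V i)]
    (hρ : ∀ i, RepIsIrreducible (ρ i)) {ξ : ∀ i, Module.Dual ℂ (V i)} (hξ : ∀ i, ξ i ≠ 0)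
    {t : ⨂[ℂ] i, V i} (ht : ∀ g, tensorCoeff ρ ξ g t = 0) : t = 0 := by
  have hflip : dualDistrib.flip t = 0 :=
    ext_of_span_eq_top (g := fun i (g : SL n) => ξ i ∘ₗ ρ i g)
      (fun i => span_dual_orbit_eq_top (hρ i) (hξ i)) ht
  refine (Module.forall_dual_apply_eq_zero_iff ℂ t).1 fun f => ?_
  rw [← dualDistribEquiv.apply_symm_apply f]
  exact LinearMap.congr_fun hflip (dualDistribEquiv.symm f)

theorem tensorCoeff_sum_tprod {a : Fin s → Fin n → ℤ} {ξ : ∀ i, Module.Dual ℂ (V i)} {v : ∀ i, V i}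
    (hξ : ∀ i (g : SL n), ξ i (ρ i g (v i)) = leadWeight (a i) g.val) {L : ℕ} (c : Fin L → ℂ)
    (X : Fin L → Fin s → SL n) (g : Fin s → SL n) :
    tensorCoeff ρ ξ g (∑ l, c l • tprod ℂ fun i => ρ i (X l i) (v i)) =
      ∑ l, c l * ∏ i, leadWeight (a i) ((g i).val * (X l i).val) := by
  simp only [map_sum, map_smul, tensorCoeff_tprod, smul_eq_mul, ← Module.End.mul_apply, ← map_mul,
    hξ, Matrix.SpecialLinearGroup.coe_mul]

end TensorCoeff

section Saturation

open PiTensorProduct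

variable {n s : ℕ} {lam : Fin s → Fin n → ℤ}

/-- The fundamental weights, with multiplicity, whose sums are the weights `lam i`. -/
abbrev FamilyIdx (lam : Fin s → Fin n → ℤ) := Σ i : Fin s, WeightIdx (lam i)

/-- The size of the leading minor attached to a fundamental weight of the family. -/
abbrev minorSize (j : FamilyIdx lam) : ℕ := j.2.1 + 1

theorem minorSize_le (j : FamilyIdx lam) : minorSize j ≤ n := j.2.1.2

theorem sum_weightIdx [NeZero n] {a : Fin n → ℤ} (ha : SLDominant a) :
    ∑ j : WeightIdx a, ((j.1 : ℤ) + 1) = ∑ r, a r - n * a ⊤ := by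
  calc
    ∑ j : WeightIdx a, ((j.1 : ℤ) + 1) = ∑ k : Fin n, ∑ _r ∈ Finset.Iic k, (expo a k : ℤ) := by
      simp [Fintype.sum_sigma, mul_comm]
    _ = ∑ r, ∑ k ∈ Finset.Ici r, (expo a k : ℤ) := Finset.sum_comm' (by simp)
    _ = ∑ r, a r - n * a ⊤ := by simp [sum_Ici_expo ha]

theorem dvd_sum_minorSize [NeZero n] (hdom : ∀ i, SLDominant (lam i))
    (hQ : (n : ℤ) ∣ ∑ i, ∑ j, lam i j) : n ∣ ∑ j : FamilyIdx lam, minorSize j := by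
  have hsum : ((∑ j : FamilyIdx lam, minorSize j : ℕ) : ℤ) =
      ∑ i, ∑ r, lam i r - n * ∑ i, lam i ⊤ := by
    rw [Fintype.sum_sigma, Finset.mul_sum, ← Finset.sum_sub_distrib]
    push_cast
    exact Finset.sum_congr rfl fun i _ => sum_weightIdx (hdom i)
  rw [← Int.natCast_dvd_natCast, hsum]
  exact dvd_sub hQ (dvd_mul_right _ _)

theorem leadSum_minorSize (m : ℕ) {L : ℕ} (c : Fin L → ℂ)
    (X : Fin L → Fin s → Matrix (Fin n) (Fin n) ℂ) (g : Fin s → Matrix (Fin n) (Fin n) ℂ) :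
    leadSum m (fun j : FamilyIdx lam => j.1) minorSize c X g =
      ∑ l, c l * ∏ i, leadWeight (m • lam i) (g i * X l i) := by
  simp only [leadWeight_nsmul, leadSum, Finset.prod_pow, Algebra.algebraMap_self, RingHom.coe_id,
    map_id, id]
  simp only [Fintype.prod_sigma (ι := Fin s), ← prod_lead_eq_leadWeight]

theorem ne_zero_of_matrixCoeff {U : Type*} [AddCommGroup U] [Module ℂ U]
    {τ : Representation ℂ (SL n) U} {a : Fin n → ℤ} {ξ : Module.Dual ℂ U} {u : U}
    (h : ∀ g : SL n, ξ (τ g u) = leadWeight a g.val) : ξ ≠ 0 := by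
  rintro rfl
  simpa [leadWeight_one] using h 1

variable {V : Fin s → Type*} [∀ i, AddCommGroup (V i)] [∀ i, Module ℂ (V i)]

theorem tprod_ne_zero {v : ∀ i, V i} (hv : ∀ i, v i ≠ 0) : tprod ℂ v ≠ 0 := by
  choose f hf using fun i => Module.Projective.exists_dual_ne_zero ℂ (hv i)
  intro h0
  have hprod := dualDistrib_apply f v
  rw [h0, map_zero] at hprod
  exact Finset.prod_ne_zero_iff.2 (fun i _ => hf i) hprod.symm

variable [∀ i, FiniteDimensional ℂ (V i)] {ρ : ∀ i, Representation ℂ (SL n) (V i)}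

theorem exists_leadSumInvariant_of_hasInvariant [NeZero n] {m : ℕ}
    (hdom : ∀ i, SLDominant (lam i)) (hirr : ∀ i, RepIsIrreducible (ρ i))
    (hhw : ∀ i, Occurs (ρ i) (m • lam i)) (hinv : HasInvariant (piTensorRep ρ)) :
    ∃ (L : ℕ) (c : Fin L → ℂ) (X : Fin L → Fin s → Matrix (Fin n) (Fin n) ℂ),
      LeadSumInvariant m (fun j : FamilyIdx lam => j.1) minorSize c X ∧
        ∃ g : Fin s → Matrix (Fin n) (Fin n) ℂ,
          leadSum m (fun j : FamilyIdx lam => j.1) minorSize c X g ≠ 0 := by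
  choose v hv using hhw
  have hdom' (i : Fin s) : SLDominant (m • lam i) :=
    fun j k h => nsmul_le_nsmul_right (hdom i j k h) m
  choose ξ hξ using fun i => exists_matrixCoeff_eq_leadWeight (hirr i) (hdom' i) (hv i)
  obtain ⟨t, ht0, ht⟩ := hinv
  obtain ⟨L, c, X, htX⟩ := exists_eq_sum_tprod_orbit hirr (fun i => (hv i).1) t
  let Y (l : Fin L) (i : Fin s) : Matrix (Fin n) (Fin n) ℂ := (X l i).val
  have hcoeff (g : Fin s → SL n) : tensorCoeff ρ ξ g t =
      leadSum m (fun j : FamilyIdx lam => j.1) minorSize c Y fun i => (g i).val := by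
    rw [htX, tensorCoeff_sum_tprod hξ, leadSum_minorSize]
  refine ⟨L, c, Y, fun g h hg hh => ?_, ?_⟩
  · let g' (i : Fin s) : SL n := ⟨g i, hg i⟩
    let h' : SL n := ⟨h, hh⟩
    have htrans := tensorCoeff_piTensorRep (ρ := ρ) ξ g' h' t
    rw [ht, hcoeff, hcoeff] at htrans
    exact htrans.symm
  · by_contra! hzero
    exact ht0 (eq_zero_of_forall_tensorCoeff_eq_zero hirr
      (fun i => ne_zero_of_matrixCoeff (hξ i)) fun g => by rw [hcoeff, hzero])

theorem hasInvariant_of_rowDet_ne_zero [NeZero n] {N : ℕ} (hdom : ∀ i, SLDominant (lam i))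
    (hirr : ∀ i, RepIsIrreducible (ρ i)) (hhw : ∀ i, Occurs (ρ i) (lam i))
    (e : Rows n (minorSize : FamilyIdx lam → ℕ) ≃ Fin n × Fin N)
    {u : FamilyIdx lam → Fin N → ℂ} {g : Fin s → SL n}
    (hg : rowDet (fun j : FamilyIdx lam => j.1) minorSize e (fun i => (g i).val) u ≠ 0) :
    HasInvariant (piTensorRep ρ) := by
  classical
  choose v hv using hhw
  choose ξ hξ using fun i => exists_matrixCoeff_eq_leadWeight (hirr i) (hdom i) (hv i)
  obtain ⟨L, c, X, hX, hrow⟩ :=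
    exists_rowDet_eq_leadSum (fun j : FamilyIdx lam => j.1) minorSize e u
  let Y (l : Fin L) (i : Fin s) : SL n := ⟨X l i, hX l i⟩
  let t : ⨂[ℂ] i, V i := ∑ l, c l • tprod ℂ fun i => ρ i (Y l i) (v i)
  have ht (g : Fin s → SL n) : tensorCoeff ρ ξ g t =
      rowDet (fun j : FamilyIdx lam => j.1) minorSize e (fun i => (g i).val) u := by
    rw [tensorCoeff_sum_tprod hξ, hrow _ fun i => (g i).2, leadSum_minorSize]
    simp only [one_smul, Y]
  refine ⟨t, fun h0 => hg (by rw [← ht, h0, map_zero]), fun h => sub_eq_zero.1 ?_⟩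
  refine eq_zero_of_forall_tensorCoeff_eq_zero hirr (fun i => ne_zero_of_matrixCoeff (hξ i))
    fun g' => ?_
  rw [map_sub, tensorCoeff_piTensorRep, ht, ht, sub_eq_zero]
  have hmul := rowDet_mul_right (fun j : FamilyIdx lam => j.1) e (fun i => (g' i).val) u h.val
  rwa [h.2, one_pow, mul_one] at hmul

end Saturation

end Saturation

theorem saturation_invariant_form (n s m : ℕ) (hm : 0 < m)
    (lam : Fin s → Fin n → ℤ) (hdom : ∀ i, SLDominant (lam i))
    (hQ : (n : ℤ) ∣ ∑ i, ∑ j, lam i j)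
    -- `ρ i` is the irreducible representation `V(m • λᵢ)`
    (V : Fin s → Type*) [∀ i, AddCommGroup (V i)] [∀ i, Module ℂ (V i)]
    [∀ i, FiniteDimensional ℂ (V i)]
    (ρ : ∀ i, Representation ℂ (SL n) (V i))
    (hirr : ∀ i, RepIsIrreducible (ρ i)) (hhw : ∀ i, Occurs (ρ i) (m • lam i))
    -- the space of `SL(n)`-invariants of `V(mλ₁) ⊗ ⋯ ⊗ V(mλ_s)` is nonzero
    (hinv : HasInvariant (piTensorRep ρ)) :
    -- then for (any model of) the representations `V(λ₁), …, V(λ_s)`, the space of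
    -- `SL(n)`-invariants of `V(λ₁) ⊗ ⋯ ⊗ V(λ_s)` is nonzero
    ∀ (W : Fin s → Type*) [∀ i, AddCommGroup (W i)] [∀ i, Module ℂ (W i)]
      [∀ i, FiniteDimensional ℂ (W i)] (σ : ∀ i, Representation ℂ (SL n) (W i)),
      (∀ i, RepIsIrreducible (σ i)) → (∀ i, Occurs (σ i) (lam i)) →
      HasInvariant (piTensorRep σ) := by
  intro W _ _ _ σ hirr' hhw'
  rcases Nat.eq_zero_or_pos n with rfl | hn
  · choose w hw using hhw'
    refine ⟨PiTensorProduct.tprod ℂ w, Saturation.tprod_ne_zero fun i => (hw i).1, fun g => ?_⟩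
    rw [Subsingleton.elim g 1, map_one, Module.End.one_apply]
  have : NeZero n := ⟨hn.ne'⟩
  obtain ⟨L, c, X, hSL, g₀, hg₀⟩ :=
    Saturation.exists_leadSumInvariant_of_hasInvariant hdom hirr hhw hinv
  obtain ⟨N, hN⟩ := Saturation.dvd_sum_minorSize hdom hQ
  let e := Fintype.equivOfCardEq (Saturation.card_rows Saturation.minorSize_le hN)
  obtain ⟨g, v, hg, hgv⟩ :=
    Saturation.exists_rowDet_ne_zero_of_leadSum (e := e) hm Saturation.minorSize_le hN hSL hg₀
  exact Saturation.hasInvariant_of_rowDet_ne_zero hdom hirr' hhw' e (g := fun i => ⟨g i, hg i⟩) hgv
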